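/- arXiv:1808.06247 — 6 statements merged into one kernel-verified Lean document; each statement's English description precedes it below -/
import Mathlib

section
/- (Extension Lemma) Let H = (V,E) be a hypergraph with edge set E = {e_1, ..., e_m}, and let e_m^- := e_m \ (e_1 ∪ ... ∪ e_{m-1}). Assume |e_m^-| ≥ 2 and that the following three conditions hold: (1) if |V| ≡ 0 (mod 4) then m ≡ 1 (mod 4); (2) if |V| ≡ 2 (mod 4) then m ≢ 0 (mod 4); (3) if |V| ≡ 3 (mod 4) and |e_m^-| = 2 then m ≢ 0 (mod 4). If the hypergraph H^- obtained from H by omitting the edge e_m and deleting the vertices of e_m^- is (Z₂×Z₂)-cordial, then H is (Z₂×Z₂)-cordial. -/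
/-!
Write `D` for the set of vertices private to the last edge and `U` for the remaining ones. Relabeling
`D` affects no edge label but that of the last edge, so the given labeling of `U` is kept and only
`D` is labeled anew.

A family of four natural numbers with pairwise differences at most one is `q` plus the indicator of
a set `R` of `r` labels, where `4 * q + r` is its sum (`balanced_structure`). Let `R'` and `F` be
the sets obtained in this way from the vertex classes of `U` and from the classes of the first
`m - 1` edges. The last edge may receive any label outside `F`, and `F` has `(m - 1) % 4` elements.
Since the sum of all elements of `K4` is zero, choosing vertex classes of total size `4 * q + r`
amounts to choosing a set `R` of `r = |V| % 4` labels, and up to a constant the label of the last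
edge is `∑ a ∈ R, a`. This sum is arbitrary if `r` is odd, an arbitrary nonzero element if `r = 2`,
and zero if `r = 0`. The choice of `R` is free if `|V| / 4 > |U| / 4`, and is subject to `R' ⊆ R`
otherwise. The three congruence conditions ensure that some admissible sum avoids `F`
(`exists_filling`).
-/

open Finset

/-- The Klein four-group `Z₂ × Z₂`. -/
abbrev K4 : Type := ZMod 2 × ZMod 2

/-- The edge label induced by a vertex labeling: the sum of the labels of the
vertices of the edge. -/
def edgeSum {V : Type*} (c : V → K4) (e : Finset V) : K4 :=
  ∑ v ∈ e, c v

/-- A labeling `c` of the vertex set `Vs` is `Z₂×Z₂`-friendly if any two label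
classes differ in size by at most one. -/
def Friendly {V : Type*} [DecidableEq V] (Vs : Finset V) (c : V → K4) : Prop :=
  ∀ a b : K4,
    |((Vs.filter fun v => c v = a).card : ℤ) -
      ((Vs.filter fun v => c v = b).card : ℤ)| ≤ 1

/-- A hypergraph with vertex set `Vs` and edge set `E` is `Z₂×Z₂`-cordial if it
admits a `Z₂×Z₂`-friendly vertex labeling whose induced edge label classes
differ in size by at most one. -/
def Cordial {V : Type*} [DecidableEq V] (Vs : Finset V) (E : Finset (Finset V)) : Prop :=
  ∃ c : V → K4, Friendly Vs c ∧
    ∀ a b : K4,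
      |((E.filter fun e => edgeSum c e = a).card : ℤ) -
        ((E.filter fun e => edgeSum c e = b).card : ℤ)| ≤ 1

/-- Four label classes with pairwise differences at most one are the quotient of the total by `4`,
plus one on a set of as many labels as the remainder. -/
theorem balanced_structure (x : K4 → ℕ) (hx : ∀ a b : K4, |(x a : ℤ) - (x b : ℤ)| ≤ 1) :
    ∃ R : Finset K4, R.card = (∑ a, x a) % 4 ∧
      ∀ a, x a = (∑ a, x a) / 4 + if a ∈ R then 1 else 0 := by
  have hsum : ∑ a, x a = x (0, 0) + x (0, 1) + x (1, 0) + x (1, 1) := by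
    rw [Fintype.sum_prod_type]
    have h : ∀ f : ZMod 2 → ℕ, ∑ i, f i = f 0 + f 1 := fun f => Fin.sum_univ_two f
    rw [h, h, h]
    ring
  have hx' : ∀ a b : K4, x a ≤ x b + 1 := fun a b => by
    have := (abs_le.mp (hx a b)).2
    omega
  set S := ∑ a, x a with hS
  have hval : ∀ a, x a = S / 4 + if S / 4 < x a then 1 else 0 := by
    intro a
    have h1 : ∀ a : K4, a = (0, 0) ∨ a = (0, 1) ∨ a = (1, 0) ∨ a = (1, 1) := by decide
    have e1 := hx' a (0, 0)
    have e2 := hx' a (0, 1)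
    have e3 := hx' a (1, 0)
    have e4 := hx' a (1, 1)
    have f1 := hx' (0, 0) a
    have f2 := hx' (0, 1) a
    have f3 := hx' (1, 0) a
    have f4 := hx' (1, 1) a
    rcases h1 a with rfl | rfl | rfl | rfl <;> split_ifs <;> omega
  refine ⟨univ.filter fun a => S / 4 < x a, ?_, fun a => by simpa using hval a⟩
  have h : S = 4 * (S / 4) + (univ.filter fun a => S / 4 < x a).card := by
    rw [Finset.card_filter]
    conv_lhs => rw [hS, Finset.sum_congr rfl fun a _ => hval a]
    rw [Finset.sum_add_distrib]
    simp [K4]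
  omega

/-- Conversely, a constant plus an indicator function is balanced. -/
theorem balanced_of_indicator (q : ℕ) (R : Finset K4) (a b : K4) :
    |((q + if a ∈ R then 1 else 0 : ℕ) : ℤ) - ((q + if b ∈ R then 1 else 0 : ℕ) : ℤ)| ≤ 1 := by
  split_ifs <;> simp

/-- For odd `r`, the sums of `r`-element sets of labels exhaust `K4`, so some sum, shifted by `t`,
avoids a proper subset `F`. -/
theorem exists_set_of_odd (t : K4) (F : Finset K4) (hF : F.card ≤ 3) (r : ℕ) (hr : r = 1 ∨ r = 3) :
    ∃ R : Finset K4, R.card = r ∧ ∑ a ∈ R, a + t ∉ F := by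
  obtain ⟨l, hl⟩ : ∃ l, l ∉ F := by
    by_contra! h
    have : F = univ := Finset.eq_univ_iff_forall.mpr h
    simp [this, K4] at hF
  rcases hr with rfl | rfl
  · exact ⟨{l - t}, by simp, by simpa using hl⟩
  · have h : ∀ u : K4, (univ.erase u).card = 3 ∧ ∑ a ∈ univ.erase u, a = u := by decide
    exact ⟨univ.erase (l - t), (h _).1, by rw [(h _).2]; simpa using hl⟩

/-- Two-element sets of labels have an arbitrary nonzero sum. -/
theorem exists_set_of_two (t : K4) (F : Finset K4) (hF : F.card ≤ 2) :
    ∃ R : Finset K4, R.card = 2 ∧ ∑ a ∈ R, a + t ∉ F := by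
  obtain ⟨l, hl⟩ : ∃ l, l ∉ insert t F := by
    by_contra! h
    have h1 : insert t F = univ := Finset.eq_univ_iff_forall.mpr h
    have h2 := Finset.card_insert_le t F
    simp [h1, K4] at h2
    omega
  rw [Finset.mem_insert, not_or] at hl
  have hne : l - t ≠ 0 := sub_ne_zero.mpr hl.1
  refine ⟨{0, l - t}, Finset.card_pair hne.symm, ?_⟩
  rw [Finset.sum_pair hne.symm]
  simpa using hl.2

/-- The sum of a three-element set of labels is the label it omits, which can be any label outside
`R'`. -/
theorem exists_set_of_three (t : K4) (F R' : Finset K4) (hF : F.card ≤ 2) (hR' : R'.card ≤ 1) :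
    ∃ R : Finset K4, R.card = 3 ∧ R' ⊆ R ∧ ∑ a ∈ R, a + t ∉ F := by
  have h : ∀ u : K4, (univ.erase u).card = 3 ∧ ∑ a ∈ univ.erase u, a = u := by decide
  obtain ⟨l, hl⟩ : ∃ l, l ∉ R'.image (· + t) ∪ F := by
    by_contra! h
    have h1 : R'.image (· + t) ∪ F = univ := Finset.eq_univ_iff_forall.mpr h
    have h2 := Finset.card_union_le (R'.image (· + t)) F
    have h3 := Finset.card_image_le (s := R') (f := (· + t))
    rw [h1] at h2
    have h4 : (univ : Finset K4).card = 4 := by decide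
    omega
  rw [Finset.mem_union, not_or] at hl
  refine ⟨univ.erase (l - t), (h _).1, fun a ha => ?_, by rw [(h _).2]; simpa using hl.2⟩
  rw [Finset.mem_erase]
  refine ⟨?_, mem_univ a⟩
  rintro rfl
  exact hl.1 (Finset.mem_image.mpr ⟨_, ha, by simp⟩)

/-- The arithmetic core: `x` lists the vertex classes before the extension, `k` is the number of new
vertices, `F` the set of forbidden labels of the last edge, and `s` the contribution of its old
vertices to its label. The function `g` tells how many new vertices receive each label. -/
theorem exists_filling (x : K4 → ℕ) (hx : ∀ a b : K4, |(x a : ℤ) - (x b : ℤ)| ≤ 1)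
    (k : ℕ) (hk : 2 ≤ k) (F : Finset K4) (hF : F.card ≤ 3) (s : K4)
    (c1 : (∑ a, x a + k) % 4 = 0 → F.card = 0)
    (c2 : (∑ a, x a + k) % 4 = 2 → F.card ≤ 2)
    (c3 : (∑ a, x a + k) % 4 = 3 → k = 2 → F.card ≤ 2) :
    ∃ g : K4 → ℕ, ∑ a, g a = k ∧
      (∀ a b : K4, |((x a + g a : ℕ) : ℤ) - ((x b + g b : ℕ) : ℤ)| ≤ 1) ∧
      ∑ a, g a • a + s ∉ F := by
  obtain ⟨R', hR'card, hR'⟩ := balanced_structure x hx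
  set S := ∑ a, x a with hS
  set q := (S + k) / 4 with hq
  set t : K4 := s - ∑ a, x a • a with ht
  -- The new classes have size `q` off `R` and `q + 1` on `R`.
  obtain ⟨R, hRcard, hle, hsum⟩ : ∃ R : Finset K4, R.card = (S + k) % 4 ∧
      (∀ a, x a ≤ q + if a ∈ R then 1 else 0) ∧ ∑ a ∈ R, a + t ∉ F := by
    rcases Nat.lt_or_ge (S / 4) q with hlt | hge
    · have hle : ∀ R : Finset K4, ∀ a, x a ≤ q + if a ∈ R then 1 else 0 := fun R a => by
        have := hR' a
        split_ifs at this ⊢ <;> omega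
      have h4 : (S + k) % 4 < 4 := Nat.mod_lt _ (by norm_num)
      obtain h0 | h1 | h2 : (S + k) % 4 = 0 ∨ ((S + k) % 4 = 1 ∨ (S + k) % 4 = 3) ∨
          (S + k) % 4 = 2 := by omega
      · have hFe := Finset.card_eq_zero.mp (c1 h0)
        exact ⟨∅, by simp [h0], hle _, by simp [hFe]⟩
      · obtain ⟨R, h, h'⟩ := exists_set_of_odd t F hF _ h1
        exact ⟨R, h, hle R, h'⟩
      · obtain ⟨R, h, h'⟩ := exists_set_of_two t F (c2 h2)
        exact ⟨R, h.trans h2.symm, hle R, h'⟩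
    · have hqS : q = S / 4 := by omega
      -- The quotient is unchanged, so the remainder grows by exactly `k`.
      have hle : ∀ R : Finset K4, R' ⊆ R → ∀ a, x a ≤ q + if a ∈ R then 1 else 0 := by
        intro R hsub a
        have h := hR' a
        by_cases ha : a ∈ R'
        · simp only [ha, hsub ha, if_true] at h ⊢
          omega
        · simp only [ha, if_false] at h
          omega
      obtain ⟨h2, hk2⟩ | ⟨h3, hk3⟩ | ⟨h3, hk2⟩ : ((S + k) % 4 = 2 ∧ R'.card = 0) ∨
          ((S + k) % 4 = 3 ∧ R'.card = 0) ∨ ((S + k) % 4 = 3 ∧ k = 2 ∧ R'.card ≤ 1) := by omega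
      · obtain ⟨R, h, h'⟩ := exists_set_of_two t F (c2 h2)
        refine ⟨R, h.trans h2.symm, hle R ?_, h'⟩
        simp [Finset.card_eq_zero.mp hk2]
      · obtain ⟨R, h, h'⟩ := exists_set_of_odd t F hF 3 (Or.inr rfl)
        refine ⟨R, h.trans h3.symm, hle R ?_, h'⟩
        simp [Finset.card_eq_zero.mp hk3]
      · obtain ⟨R, h, hsub, h'⟩ := exists_set_of_three t F R' (c3 h3 hk2.1) hk2.2
        exact ⟨R, h.trans h3.symm, hle R hsub, h'⟩
  have hadd : ∀ a, x a + ((q + if a ∈ R then 1 else 0) - x a) = q + if a ∈ R then 1 else 0 :=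
    fun a => Nat.add_sub_of_le (hle a)
  refine ⟨fun a => (q + if a ∈ R then 1 else 0) - x a, ?_, fun a b => ?_, ?_⟩
  · have h1 := Finset.sum_congr (rfl : (univ : Finset K4) = univ) fun a _ => hadd a
    rw [Finset.sum_add_distrib, Finset.sum_add_distrib] at h1
    simp [K4] at h1
    simp only [K4] at hRcard hS ⊢
    omega
  · simp only [hadd]
    exact balanced_of_indicator q R a b
  · have h1 := Finset.sum_congr (rfl : (univ : Finset K4) = univ)
      fun a _ => congrArg (fun n : ℕ => n • a) (hadd a)
    have hzero : ∑ a : K4, a = 0 := by decide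
    simp only [add_smul, Finset.sum_add_distrib, ite_smul, one_smul, zero_smul,
      Finset.sum_ite_mem, Finset.univ_inter] at h1
    rw [← Finset.smul_sum, hzero, smul_zero, zero_add] at h1
    rw [ht, ← h1] at hsum
    convert hsum using 2
    abel

/-- A finite set can be labeled with prescribed class sizes. -/
theorem exists_labeling {V : Type*} [DecidableEq V] (D : Finset V) :
    ∀ g : K4 → ℕ, ∑ a, g a = D.card →
      ∃ d : V → K4, ∀ a, (D.filter fun v => d v = a).card = g a := by
  induction D using Finset.induction_on with
  | empty =>
    intro g hg
    refine ⟨fun _ => 0, fun a => ?_⟩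
    have := (Finset.sum_eq_zero_iff.mp (hg.trans Finset.card_empty)) a (mem_univ a)
    simp [this]
  | insert v D hv ih =>
    intro g hg
    rw [Finset.card_insert_of_notMem hv] at hg
    obtain ⟨b, -, hb⟩ : ∃ b ∈ (univ : Finset K4), g b ≠ 0 := by
      apply Finset.exists_ne_zero_of_sum_ne_zero
      omega
    have hg' : ∀ a, g a = (g a - if a = b then 1 else 0) + if a = b then 1 else 0 := by
      intro a
      split_ifs with h
      · subst h
        omega
      · simp
    obtain ⟨d, hd⟩ := ih (fun a => g a - if a = b then 1 else 0) (by
      rw [Finset.sum_congr rfl fun a _ => hg' a, Finset.sum_add_distrib] at hg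
      simpa using hg)
    refine ⟨Function.update d v b, fun a => ?_⟩
    have hD : (D.filter fun w => Function.update d v b w = a) = D.filter fun w => d w = a := by
      apply Finset.filter_congr
      intro w hw
      rw [Function.update_of_ne (ne_of_mem_of_not_mem hw hv)]
    rw [Finset.filter_insert, hD, Function.update_self, hg' a, ← hd a]
    by_cases h : b = a
    · simp [h, hv]
    · simp [h, Ne.symm h]

/-- **Extension Lemma.** Let `H` be a hypergraph with vertex set `Vs` and edge
set `{e 0, …, e (m-1)}` (the edges distinct, each of size at least 2), and let
`eminus = e last \ (e 0 ∪ ⋯ ∪ e (m-2))` where `last` is the index of the last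
edge.  Assume `|eminus| ≥ 2` and: (1) if `|V| ≡ 0 (mod 4)` then `m ≡ 1 (mod 4)`;
(2) if `|V| ≡ 2 (mod 4)` then `m ≢ 0 (mod 4)`; (3) if `|V| ≡ 3 (mod 4)` and
`|eminus| = 2` then `m ≢ 0 (mod 4)`.  If the hypergraph obtained by omitting
the last edge and deleting the vertices of `eminus` is `Z₂×Z₂`-cordial, then so
is `H`. -/
theorem extension_lemma {V : Type*} [DecidableEq V] (Vs : Finset V)
    (m : ℕ) (e : Fin m → Finset V)
    (hinj : Function.Injective e)
    (hsub : ∀ i, e i ⊆ Vs)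
    (hcard : ∀ i, 2 ≤ (e i).card)
    (last : Fin m) (hlast : (last : ℕ) = m - 1)
    (eminus : Finset V)
    (heminus : eminus = e last \ (Finset.univ.erase last).biUnion e)
    (h2 : 2 ≤ eminus.card)
    (c1 : Vs.card % 4 = 0 → m % 4 = 1)
    (c2 : Vs.card % 4 = 2 → m % 4 ≠ 0)
    (c3 : Vs.card % 4 = 3 → eminus.card = 2 → m % 4 ≠ 0)
    (hH : Cordial (Vs \ eminus) ((Finset.univ.erase last).image e)) :
    Cordial Vs (Finset.univ.image e) := by
  classical
  obtain ⟨c, hfr, hed⟩ := hH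
  set E' := (Finset.univ.erase last).image e with hE'
  have hE'card : E'.card = m - 1 := by
    rw [hE', Finset.card_image_of_injective _ hinj]
    simp
  have hnotin : e last ∉ E' := by
    rw [hE', Finset.mem_image]
    rintro ⟨i, hi, h⟩
    exact (Finset.mem_erase.mp hi).1 (hinj h)
  have hE : Finset.univ.image e = insert (e last) E' := by
    rw [hE', ← Finset.image_insert, Finset.insert_erase (mem_univ last)]
  have hDlast : eminus ⊆ e last := by
    rw [heminus]
    exact Finset.sdiff_subset
  have hD : eminus ⊆ Vs := hDlast.trans (hsub last)
  have hdisj : ∀ f ∈ E', ∀ v ∈ f, v ∉ eminus := by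
    intro f hf v hv hve
    obtain ⟨i, hi, rfl⟩ := Finset.mem_image.mp hf
    rw [heminus, Finset.mem_sdiff] at hve
    exact hve.2 (Finset.mem_biUnion.mpr ⟨i, hi, hv⟩)
  have hm : 0 < m := last.pos
  have hysum : ∑ a, (E'.filter fun f => edgeSum c f = a).card = m - 1 := by
    rw [← hE'card]
    exact (Finset.card_eq_sum_card_fiberwise fun _ _ => mem_univ _).symm
  have hxsum : ∑ a, ((Vs \ eminus).filter fun v => c v = a).card + eminus.card = Vs.card := by
    rw [← Finset.card_sdiff_add_card_eq_card hD]
    congr 1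
    exact (Finset.card_eq_sum_card_fiberwise fun _ _ => mem_univ _).symm
  obtain ⟨F, hFcard, hF⟩ := balanced_structure _ hed
  rw [hysum] at hFcard hF
  obtain ⟨g, hgsum, hgbal, hgF⟩ := exists_filling _ hfr eminus.card h2 F (by omega)
    (∑ v ∈ e last \ eminus, c v)
    (by rw [hxsum]; intro h; have := c1 h; omega)
    (by rw [hxsum]; intro h; have := c2 h; omega)
    (by rw [hxsum]; intro h h'; have := c3 h h'; omega)
  obtain ⟨d, hd⟩ := exists_labeling eminus g hgsum
  refine ⟨fun v => if v ∈ eminus then d v else c v, ?_, ?_⟩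
  · have hcount : ∀ a, (Vs.filter fun v => (if v ∈ eminus then d v else c v) = a).card =
        ((Vs \ eminus).filter fun v => c v = a).card + g a := by
      intro a
      rw [← hd a, ← Finset.card_union_of_disjoint]
      · congr 1
        ext v
        have := @hD v
        by_cases hv : v ∈ eminus <;> simp [hv]
        intro _
        exact this hv
      · exact (Finset.disjoint_filter_filter Finset.sdiff_disjoint)
    intro a b
    rw [hcount, hcount]
    exact hgbal a b
  · have hold : ∀ f ∈ E', edgeSum (fun v => if v ∈ eminus then d v else c v) f = edgeSum c f :=
      fun f hf => Finset.sum_congr rfl fun v hv => if_neg (hdisj f hf v hv)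
    have hnew : edgeSum (fun v => if v ∈ eminus then d v else c v) (e last) ∉ F := by
      convert hgF using 2
      rw [edgeSum, ← Finset.sum_sdiff hDlast, add_comm]
      congr 1
      · rw [Finset.sum_congr rfl fun v hv => if_pos hv,
          ← Finset.sum_fiberwise_of_maps_to (t := univ) (g := d) fun _ _ => mem_univ _]
        refine Finset.sum_congr rfl fun a _ => ?_
        rw [← hd a]
        exact Finset.sum_eq_card_nsmul fun v hv => (Finset.mem_filter.mp hv).2
      · exact Finset.sum_congr rfl fun v hv => if_neg (Finset.mem_sdiff.mp hv).2
    generalize (fun v => if v ∈ eminus then d v else c v) = cnew at hold hnew ⊢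
    -- The label of the last edge joins the set `F` of labels whose class is larger by one.
    have hcount : ∀ a, ((Finset.univ.image e).filter fun f => edgeSum cnew f = a).card =
        (m - 1) / 4 + if a ∈ insert (edgeSum cnew (e last)) F then 1 else 0 := by
      intro a
      have h1 : (E'.filter fun f => edgeSum cnew f = a) = E'.filter fun f => edgeSum c f = a :=
        Finset.filter_congr fun f hf => by rw [hold f hf]
      rw [hE, Finset.filter_insert, h1]
      by_cases h : edgeSum cnew (e last) = a
      · rw [if_pos h, Finset.card_insert_of_notMem (by simp [hnotin]), hF a]
        subst h
        simp [hnew]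
      · rw [if_neg h, hF a]
        simp [Ne.symm h]
    intro a b
    rw [hcount, hcount]
    exact balanced_of_indicator _ _ a b
end

section
/- Let p ≥ 3. Then every p-uniform hypertree is (Z₂×Z₂)-cordial. -/
/-!
A `p`-uniform hypertree is built from one vertex by attaching edges one at a time, each meeting the
part already built in exactly one vertex (`Hypertree.built`). A cordial labeling is extended along
this construction. When the edge `e` is attached at `x`, the new vertices may receive any labels
that lead to a balanced distribution: `q` copies of each label plus one more of each label in some
`T`, with `4 * q + #T` the new number of vertices. Since the four labels sum to zero and the group
has exponent two, the label of `e` is `c x + σ + ∑ T`, where `σ` is the sum of all old vertex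
labels (`exists_attach`).

If `#T` is `1` or `3`, the sum `∑ T` is arbitrary; if `#T = 2` it is any nonzero element; if
`#T = 0` it is zero. The number of vertices is `1 + m * (p - 1)`, where `m` is the number of edges,
and a look at residues modulo `4` shows that a least used edge label is always available, except
when `p ≡ 2` and `m ≡ 2` (`good_step`). For `p = 3` the old distribution excludes one choice of `T`
in every other step, but then two edge labels are least used.

In the remaining case `p ≥ 6`, and three edges are attached at once starting from `m ≡ 0`
(`good_triple`), using the freedom to decide which new vertex receives which label.
-/


open Finset

open Finset

/-- `IsWalkFrom E u steps` says that starting at vertex `u`, the sequence of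
(edge, vertex) pairs in `steps` forms a walk `u, f₁, v₁, f₂, v₂, …` in the
hypergraph with edge set `E`: each `fᵢ` is an edge containing both the previous
vertex and `vᵢ`. -/
def IsWalkFrom {V : Type*} [DecidableEq V] (E : Finset (Finset V)) :
    V → List (Finset V × V) → Prop
  | _, [] => True
  | u, (f, v) :: rest => f ∈ E ∧ u ∈ f ∧ v ∈ f ∧ IsWalkFrom E v rest

/-- The final vertex of a walk starting at `u`. -/
def lastVertex {V : Type*} (u : V) (steps : List (Finset V × V)) : V :=
  (steps.map Prod.snd).getLastD u

/-- A path: a walk with all vertices distinct and all edges distinct. -/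
def IsPathFrom {V : Type*} [DecidableEq V] (E : Finset (Finset V)) (u : V)
    (steps : List (Finset V × V)) : Prop :=
  IsWalkFrom E u steps ∧ (u :: steps.map Prod.snd).Nodup ∧ (steps.map Prod.fst).Nodup

/-- A hypergraph is connected if every two of its vertices are joined by a path. -/
def HConnected {V : Type*} [DecidableEq V] (Vs : Finset V) (E : Finset (Finset V)) : Prop :=
  ∀ u ∈ Vs, ∀ v ∈ Vs, ∃ steps, IsPathFrom E u steps ∧ lastVertex u steps = v

/-- A cycle: a walk with at least two edges, all edges distinct, all vertices
distinct except that the last vertex equals the first. -/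
def IsCycle {V : Type*} [DecidableEq V] (E : Finset (Finset V)) (u : V)
    (steps : List (Finset V × V)) : Prop :=
  IsWalkFrom E u steps ∧ 2 ≤ steps.length ∧ (steps.map Prod.fst).Nodup ∧
    (u :: (steps.map Prod.snd).dropLast).Nodup ∧ lastVertex u steps = u

/-- A hypertree: a (nonempty) connected hypergraph, all of whose edges have at
least two vertices, containing no cycles. -/
def Hypertree {V : Type*} [DecidableEq V] (Vs : Finset V) (E : Finset (Finset V)) : Prop :=
  Vs.Nonempty ∧ (∀ e ∈ E, e ⊆ Vs) ∧ (∀ e ∈ E, 2 ≤ e.card) ∧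
    HConnected Vs E ∧ ∀ u steps, ¬ IsCycle E u steps

/-! ### Hypertrees are built by attaching edges -/

/-- `Built p m U F`: the hypergraph `(U, F)` arises from a single vertex by attaching `m` edges of
size `p` one after another, each new edge meeting the current vertex set in exactly one vertex. -/
inductive Built {V : Type*} [DecidableEq V] (p : ℕ) :
    ℕ → Finset V → Finset (Finset V) → Prop
  | single (v : V) : Built p 0 {v} ∅
  | attach {m : ℕ} {U : Finset V} {F : Finset (Finset V)} (e : Finset V) (x : V)
      (h : Built p m U F) (heF : e ∉ F) (hcard : e.card = p) (hxU : x ∈ U) (hxe : x ∈ e)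
      (hx : ∀ y ∈ e, y ∈ U → y = x) : Built p (m + 1) (U ∪ e) (insert e F)

section Tree

set_option linter.unusedSectionVars false

variable {V : Type*} [DecidableEq V]

lemma Built.subset {p m : ℕ} {U : Finset V} {F : Finset (Finset V)} (h : Built p m U F) :
    ∀ e ∈ F, e ⊆ U := by
  induction h with
  | single v => simp
  | attach e x h heF hcard hxU hxe hx ih =>
    intro f hf
    rcases Finset.mem_insert.1 hf with rfl | hf
    · exact Finset.subset_union_right
    · exact (ih f hf).trans Finset.subset_union_left

lemma Built.card_edges {p m : ℕ} {U : Finset V} {F : Finset (Finset V)} (h : Built p m U F) :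
    F.card = m := by
  induction h with
  | single v => simp
  | attach e x h heF hcard hxU hxe hx ih => rw [Finset.card_insert_of_notMem heF, ih]

lemma card_attach {p : ℕ} {U e : Finset V} {x : V} (hcard : e.card = p) (hxU : x ∈ U)
    (hxe : x ∈ e) (hx : ∀ y ∈ e, y ∈ U → y = x) :
    (U ∪ e).card = U.card + (p - 1) := by
  have h1 := Finset.card_union_add_card_inter U e
  have h2 : U ∩ e = {x} := by
    ext y
    simp only [Finset.mem_inter, Finset.mem_singleton]
    exact ⟨fun h => hx y h.2 h.1, fun h => h ▸ ⟨hxU, hxe⟩⟩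
  have h3 : 0 < e.card := Finset.card_pos.2 ⟨x, hxe⟩
  rw [h2, Finset.card_singleton] at h1
  omega

lemma Built.card_verts {p m : ℕ} {U : Finset V} {F : Finset (Finset V)} (h : Built p m U F) :
    U.card = 1 + m * (p - 1) := by
  induction h with
  | single v => simp
  | attach e x h heF hcard hxU hxe hx ih =>
    rw [card_attach hcard hxU hxe hx, ih]
    ring

lemma Built.nonempty {p m : ℕ} {U : Finset V} {F : Finset (Finset V)} (h : Built p m U F) :
    U.Nonempty := by
  rw [← Finset.card_pos, h.card_verts]
  omega

lemma lastVertex_cons (u v : V) (f : Finset V) (s : List (Finset V × V)) :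
    lastVertex u ((f, v) :: s) = lastVertex v s := by
  simp only [lastVertex, List.map_cons, List.getLastD_cons]

lemma lastVertex_concat (u v : V) (f : Finset V) (s : List (Finset V × V)) :
    lastVertex u (s ++ [(f, v)]) = v := by
  simp [lastVertex]

lemma IsWalkFrom.mono {E F : Finset (Finset V)} (hFE : F ⊆ E) {u : V}
    {s : List (Finset V × V)} (h : IsWalkFrom F u s) : IsWalkFrom E u s := by
  induction s generalizing u with
  | nil => trivial
  | cons a s ih =>
    obtain ⟨f, v⟩ := a
    obtain ⟨h1, h2, h3, h4⟩ := h
    exact ⟨hFE h1, h2, h3, ih h4⟩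

lemma IsWalkFrom.mem {E : Finset (Finset V)} {u : V}
    {s : List (Finset V × V)} (h : IsWalkFrom E u s) : ∀ a ∈ s, a.1 ∈ E ∧ a.2 ∈ a.1 := by
  induction s generalizing u with
  | nil => simp
  | cons a s ih =>
    obtain ⟨f, v⟩ := a
    obtain ⟨h1, h2, h3, h4⟩ := h
    intro b hb
    rcases List.mem_cons.1 hb with rfl | hb
    · exact ⟨h1, h3⟩
    · exact ih h4 b hb

lemma IsWalkFrom.concat {E : Finset (Finset V)} {u y : V} {e : Finset V}
    {s : List (Finset V × V)} (h : IsWalkFrom E u s) (he : e ∈ E) (hl : lastVertex u s ∈ e)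
    (hy : y ∈ e) : IsWalkFrom E u (s ++ [(e, y)]) := by
  induction s generalizing u with
  | nil => exact ⟨he, by simpa [lastVertex] using hl, hy, trivial⟩
  | cons a s ih =>
    obtain ⟨f, v⟩ := a
    obtain ⟨h1, h2, h3, h4⟩ := h
    rw [lastVertex_cons] at hl
    exact ⟨h1, h2, h3, ih h4 hl⟩

/-- A walk that starts in `U` and ends outside `U` uses an edge that leaves `U`. -/
lemma IsWalkFrom.escape {E : Finset (Finset V)} {U : Finset V} {u : V}
    {s : List (Finset V × V)} (h : IsWalkFrom E u s) (hu : u ∈ U) (hl : lastVertex u s ∉ U) :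
    ∃ e ∈ E, ∃ x ∈ e, x ∈ U ∧ ¬ e ⊆ U := by
  induction s generalizing u with
  | nil => exact absurd hu (by simpa [lastVertex] using hl)
  | cons a s ih =>
    obtain ⟨f, v⟩ := a
    obtain ⟨h1, h2, h3, h4⟩ := h
    rw [lastVertex_cons] at hl
    by_cases hv : v ∈ U
    · exact ih h4 hv hl
    · exact ⟨f, h1, u, h2, hu, fun hf => hv (hf h3)⟩

/-- In an acyclic hypergraph, an edge outside the connected part `(U, F)` meets `U` in at most one
vertex: two common vertices, a path of `F` joining them and the edge would form a cycle. -/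
lemma inter_unique {E F : Finset (Finset V)} {U e : Finset V}
    (hac : ∀ u steps, ¬ IsCycle E u steps) (hFE : F ⊆ E) (hconn : HConnected U F)
    (heE : e ∈ E) (heF : e ∉ F) {x y : V} (hxe : x ∈ e) (hxU : x ∈ U) (hye : y ∈ e)
    (hyU : y ∈ U) : y = x := by
  by_contra hne
  obtain ⟨s, ⟨hw, hv, hed⟩, hl⟩ := hconn x hxU y hyU
  refine hac x (s ++ [(e, x)]) ⟨(hw.mono hFE).concat heE (hl ▸ hye) hxe, ?_, ?_, ?_,
    lastVertex_concat _ _ _ _⟩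
  · cases s with
    | nil => exact absurd hl.symm (by simpa [lastVertex] using hne)
    | cons a s => simp
  · rw [List.map_append, List.nodup_append]
    refine ⟨hed, by simp, ?_⟩
    intro f hf g hg hfg
    obtain ⟨a, ha, rfl⟩ := List.mem_map.1 hf
    have : g = e := by simpa using hg
    exact heF (this ▸ hfg ▸ (hw.mem a ha).1)
  · simpa using hv

lemma hconnected_attach {p m : ℕ} {U : Finset V} {F : Finset (Finset V)} {e : Finset V} {x : V}
    (h : Built p m U F) (heF : e ∉ F) (hxU : x ∈ U) (hxe : x ∈ e) (hconn : HConnected U F) :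
    HConnected (U ∪ e) (insert e F) := by
  have hsub : F ⊆ insert e F := Finset.subset_insert _ _
  have hmemU : ∀ {u : V} {s : List (Finset V × V)}, IsWalkFrom F u s →
      ∀ w ∈ s.map Prod.snd, w ∈ U := by
    intro u s hw w hws
    obtain ⟨a, ha, rfl⟩ := List.mem_map.1 hws
    exact h.subset _ (hw.mem a ha).1 (hw.mem a ha).2
  have hmemF : ∀ {u : V} {s : List (Finset V × V)}, IsWalkFrom F u s →
      e ∉ s.map Prod.fst := by
    intro u s hw hws
    obtain ⟨a, ha, hae⟩ := List.mem_map.1 hws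
    exact heF (hae ▸ (hw.mem a ha).1)
  intro u hu v hv
  by_cases huU : u ∈ U <;> by_cases hvU : v ∈ U
  · obtain ⟨s, ⟨hw, h1, h2⟩, hl⟩ := hconn u huU v hvU
    exact ⟨s, ⟨hw.mono hsub, h1, h2⟩, hl⟩
  · have hve : v ∈ e := (Finset.mem_union.1 hv).resolve_left hvU
    obtain ⟨s, ⟨hw, h1, h2⟩, hl⟩ := hconn u huU x hxU
    refine ⟨s ++ [(e, v)], ⟨(hw.mono hsub).concat (Finset.mem_insert_self _ _) (hl ▸ hxe) hve,
      ?_, ?_⟩, lastVertex_concat _ _ _ _⟩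
    · rw [List.map_append, ← List.cons_append, List.nodup_append]
      refine ⟨h1, by simp, ?_⟩
      intro a ha b hb hab
      have hb' : b = v := by simpa using hb
      rcases List.mem_cons.1 ha with rfl | ha
      · exact hvU (hb' ▸ hab ▸ huU)
      · exact hvU (hb' ▸ hab ▸ hmemU hw a ha)
    · rw [List.map_append, List.nodup_append]
      refine ⟨h2, by simp, ?_⟩
      intro a ha b hb hab
      have hb' : b = e := by simpa using hb
      exact hmemF hw (hb' ▸ hab ▸ ha)
  · have hue : u ∈ e := (Finset.mem_union.1 hu).resolve_left huU
    obtain ⟨s, ⟨hw, h1, h2⟩, hl⟩ := hconn x hxU v hvU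
    refine ⟨(e, x) :: s, ⟨⟨Finset.mem_insert_self _ _, hue, hxe, hw.mono hsub⟩, ?_, ?_⟩, ?_⟩
    · rw [List.nodup_cons]
      refine ⟨?_, h1⟩
      intro hmem
      rcases List.mem_cons.1 hmem with rfl | hmem
      · exact huU hxU
      · exact huU (hmemU hw u hmem)
    · exact List.nodup_cons.2 ⟨hmemF hw, h2⟩
    · rw [lastVertex_cons, hl]
  · have hue : u ∈ e := (Finset.mem_union.1 hu).resolve_left huU
    have hve : v ∈ e := (Finset.mem_union.1 hv).resolve_left hvU
    by_cases huv : u = v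
    · exact ⟨[], ⟨trivial, by simp, by simp⟩, by simpa [lastVertex] using huv⟩
    · exact ⟨[(e, v)], ⟨⟨Finset.mem_insert_self _ _, hue, hve, trivial⟩, by simpa using huv,
        by simp⟩, by simp [lastVertex]⟩

/-- Every uniform hypertree arises by attaching its edges one after another. -/
lemma Hypertree.built {p : ℕ} {Vs : Finset V} {E : Finset (Finset V)}
    (htree : Hypertree Vs E) (hunif : ∀ e ∈ E, e.card = p) : Built p E.card Vs E := by
  obtain ⟨⟨v0, hv0⟩, hsub, htwo, hconn, hac⟩ := htree
  have key : ∀ k ≤ E.card, ∃ U F, Built p k U F ∧ U ⊆ Vs ∧ F ⊆ E ∧ HConnected U F := by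
    intro k
    induction k with
    | zero =>
      intro _
      refine ⟨{v0}, ∅, Built.single v0, by simpa using hv0, by simp, ?_⟩
      intro u hu v hv
      rw [Finset.mem_singleton] at hu hv
      exact ⟨[], ⟨trivial, by simp, by simp⟩, by simp [lastVertex, hu, hv]⟩
    | succ k ih =>
      intro hk
      obtain ⟨U, F, hB, hU, hF, hc⟩ := ih (by omega)
      obtain ⟨e, heE, heF, x, hxe, hxU⟩ : ∃ e ∈ E, e ∉ F ∧ ∃ x ∈ e, x ∈ U := by
        by_cases hUV : Vs ⊆ U
        · obtain ⟨e, he, heF⟩ := Finset.exists_mem_notMem_of_card_lt_card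
            (s := F) (t := E) (by rw [hB.card_edges]; omega)
          obtain ⟨x, hx⟩ := Finset.card_pos.1 (show 0 < e.card by have := htwo e he; omega)
          exact ⟨e, he, heF, x, hx, hUV (hsub e he hx)⟩
        · obtain ⟨v, hvV, hvU⟩ := Finset.not_subset.1 hUV
          obtain ⟨u, hu⟩ := hB.nonempty
          obtain ⟨s, ⟨hw, -, -⟩, hl⟩ := hconn u (hU hu) v hvV
          obtain ⟨e, he, x, hxe, hxU, hesub⟩ := hw.escape hu (hl ▸ hvU)
          exact ⟨e, he, fun h => hesub (hB.subset e h), x, hxe, hxU⟩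
      refine ⟨U ∪ e, insert e F, Built.attach e x hB heF (hunif e heE) hxU hxe
        (fun y hye hyU => inter_unique hac hF hc heE heF hxe hxU hye hyU),
        Finset.union_subset hU (hsub e heE), Finset.insert_subset heE hF,
        hconnected_attach hB heF hxU hxe hc⟩
  obtain ⟨U, F, hB, hU, hF, -⟩ := key E.card le_rfl
  have hFE : F = E := Finset.eq_of_subset_of_card_le hF hB.card_edges.ge
  subst hFE
  have hUV : U = Vs := by
    refine hU.antisymm fun v hv => ?_
    by_contra hvU
    obtain ⟨u, hu⟩ := hB.nonempty
    obtain ⟨s, ⟨hw, -, -⟩, hl⟩ := hconn u (hU hu) v hv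
    obtain ⟨e, he, x, hxe, hxU, hesub⟩ := hw.escape hu (hl ▸ hvU)
    exact hesub (hB.subset e he)
  exact hUV ▸ hB

end Tree

/-! ### Balanced distributions on the Klein four-group -/

/-- A distribution of multiplicities over the labels is balanced if any two of them differ by at
most one. -/
def Bal (f : K4 → ℕ) : Prop := ∀ a b, f a ≤ f b + 1

/-- The total of a multiset of labels with multiplicities `f`. -/
def wsum (f : K4 → ℕ) : K4 := ∑ a, f a • a

/-- The balanced distribution giving multiplicity `q + 1` to the labels in `T` and `q` to the
others. -/
def lev (q : ℕ) (T : Finset K4) (a : K4) : ℕ := q + if a ∈ T then 1 else 0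

lemma sum_K4 {M : Type*} [AddCommMonoid M] (f : K4 → M) :
    ∑ a, f a = f (0, 0) + f (0, 1) + (f (1, 0) + f (1, 1)) := by
  have h : ∀ g : ZMod 2 → M, ∑ a, g a = g 0 + g 1 := fun g => Fin.sum_univ_two g
  rw [Fintype.sum_prod_type, h, h, h]

lemma forall_K4 {P : K4 → Prop} :
    (∀ a, P a) ↔ P (0, 0) ∧ P (0, 1) ∧ P (1, 0) ∧ P (1, 1) := by
  have h : ∀ Q : ZMod 2 → Prop, (∀ a, Q a) ↔ Q 0 ∧ Q 1 := fun Q => Fin.forall_fin_two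
  rw [Prod.forall, h, h, h, and_assoc]

lemma K4_add_self (a : K4) : a + a = 0 := by
  revert a; decide

lemma K4_add_cancel (a b : K4) : a + (a + b) = b := by
  rw [← add_assoc, K4_add_self, zero_add]

lemma bal_lev (q : ℕ) (T : Finset K4) : Bal (lev q T) := by
  intro a b
  unfold lev
  split_ifs <;> omega

lemma sum_lev (q : ℕ) (T : Finset K4) : ∑ a, lev q T a = 4 * q + T.card := by
  simp [lev, Finset.sum_add_distrib]

lemma wsum_lev (q : ℕ) (T : Finset K4) : wsum (lev q T) = ∑ a ∈ T, a := by
  have h : ∑ a : K4, a = 0 := by decide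
  have hq : ∑ a : K4, q • a = 0 := by rw [Finset.sum_nsmul, h, smul_zero]
  simp only [wsum, lev, add_smul, Finset.sum_add_distrib, hq, zero_add, ite_smul, one_smul,
    zero_smul, Finset.sum_ite_mem, Finset.univ_inter]

lemma Bal.bounds {f : K4 → ℕ} (hf : Bal f) {q s : ℕ} (hs : s < 4)
    (hsum : ∑ a, f a = 4 * q + s) (a : K4) : q ≤ f a ∧ f a ≤ q + 1 := by
  have h1 := forall_K4.1 fun a => forall_K4.1 (hf a)
  rw [sum_K4] at hsum
  revert a
  rw [forall_K4]
  omega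

/-- Raising a smallest multiplicity keeps a distribution balanced. -/
lemma Bal.add_min {f : K4 → ℕ} (hf : Bal f) {l : K4} (hl : ∀ b, f l ≤ f b) :
    Bal (fun a => f a + if a = l then 1 else 0) := by
  intro a b
  have h1 := hf a b
  have h2 := hl b
  dsimp only
  split_ifs with h3 h4
  · omega
  · subst h3; omega
  · omega
  · omega

lemma exists_min (f : K4 → ℕ) : ∃ l, ∀ b, f l ≤ f b := Finite.exists_min f

/-- If the total is not congruent to `3` modulo `4`, there are at least two labels of smallest
multiplicity, so any one label can be avoided. -/
lemma Bal.exists_min_ne {f : K4 → ℕ} (hf : Bal f) (hsum : (∑ a, f a) % 4 ≤ 2) (z : K4) :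
    ∃ l, l ≠ z ∧ ∀ b, f l ≤ f b := by
  by_contra! hcon
  obtain ⟨q, s, hs, hqs⟩ : ∃ q s, s < 3 ∧ ∑ a, f a = 4 * q + s :=
    ⟨(∑ a, f a) / 4, (∑ a, f a) % 4, by omega, by omega⟩
  have hb := hf.bounds (by omega) hqs
  have hone : ∀ a, a ≠ z → f a = q + 1 := by
    intro a ha
    obtain ⟨b, hb'⟩ := hcon a ha
    have := hb a
    have := hb b
    omega
  have h4 := forall_K4.1 hone
  have hbz := forall_K4.1 fun a => (hb a).1
  rw [sum_K4] at hqs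
  obtain ⟨i1, i2, i3, i4⟩ := h4
  by_cases e1 : ((0, 0) : K4) = z
  · have := i2 (by rw [← e1]; decide)
    have := i3 (by rw [← e1]; decide)
    have := i4 (by rw [← e1]; decide)
    omega
  by_cases e2 : ((0, 1) : K4) = z
  · have := i1 e1
    have := i3 (by rw [← e2]; decide)
    have := i4 (by rw [← e2]; decide)
    omega
  have := i1 e1
  have := i2 e2
  by_cases e3 : ((1, 0) : K4) = z
  · have := i4 (by rw [← e3]; decide)
    omega
  have := i3 e3
  omega

/-- If the total is divisible by `4`, all multiplicities agree. -/
lemma Bal.const {f : K4 → ℕ} (hf : Bal f) (hsum : (∑ a, f a) % 4 = 0) (a b : K4) :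
    f a = f b := by
  have h := hf.bounds (q := (∑ a, f a) / 4) (s := 0) (by omega) (by omega)
  have h1 := forall_K4.1 h
  have hs : ∑ a, f a = 4 * ((∑ a, f a) / 4) := by omega
  have hq : ∀ c, f c = (∑ a, f a) / 4 := by
    generalize (∑ a, f a) / 4 = q at *
    rw [sum_K4] at hs
    rw [forall_K4]
    omega
  rw [hq a, hq b]

lemma sum_compl (z : K4) : ∑ a ∈ ({z}ᶜ : Finset K4), a = z := by
  revert z; decide

lemma card_compl_K4 (z : K4) : ({z}ᶜ : Finset K4).card = 3 := by
  revert z; decide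

lemma exists_pair (w : K4) (hw : w ≠ 0) : ∃ T : Finset K4, T.card = 2 ∧ ∑ a ∈ T, a = w :=
  ⟨{0, w}, Finset.card_pair hw.symm, by rw [Finset.sum_pair hw.symm, zero_add]⟩

lemma pair_sum_ne {T : Finset K4} (hT : T.card = 2) : ∑ a ∈ T, a ≠ 0 := by
  obtain ⟨a, b, hab, rfl⟩ := Finset.card_eq_two.1 hT
  rw [Finset.sum_pair hab]
  intro h
  apply hab
  have := K4_add_cancel a b
  rw [h, add_zero] at this
  exact this

/-! ### Extending a labeling to a new edge -/

section Labeling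

set_option linter.unusedSectionVars false

variable {V : Type*} [DecidableEq V]

/-- The number of vertices of `U` with a given label. -/
def vcnt (U : Finset V) (c : V → K4) (a : K4) : ℕ := (U.filter fun v => c v = a).card

/-- The number of edges of `F` with a given induced label. -/
def ecnt (F : Finset (Finset V)) (c : V → K4) (a : K4) : ℕ :=
  (F.filter fun e => edgeSum c e = a).card

lemma sum_vcnt (U : Finset V) (c : V → K4) : ∑ a, vcnt U c a = U.card :=
  (Finset.card_eq_sum_card_fiberwise (f := c) (t := Finset.univ) (by simp [Set.MapsTo])).symm

lemma sum_ecnt (F : Finset (Finset V)) (c : V → K4) : ∑ a, ecnt F c a = F.card :=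
  (Finset.card_eq_sum_card_fiberwise (f := edgeSum c) (t := Finset.univ)
    (by simp [Set.MapsTo])).symm

lemma wsum_vcnt (U : Finset V) (c : V → K4) : wsum (vcnt U c) = ∑ v ∈ U, c v := by
  unfold wsum vcnt
  rw [← Finset.sum_fiberwise U c c]
  refine Finset.sum_congr rfl fun a _ => ?_
  rw [Finset.sum_congr rfl (g := fun _ => a) (fun v hv => (Finset.mem_filter.1 hv).2),
    Finset.sum_const]

lemma vcnt_congr {U : Finset V} {c d : V → K4} (h : ∀ v ∈ U, c v = d v) :
    vcnt U c = vcnt U d := by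
  funext a
  unfold vcnt
  congr 1
  exact Finset.filter_congr fun v hv => by rw [h v hv]

lemma vcnt_union {U N : Finset V} (h : Disjoint U N) (c : V → K4) (a : K4) :
    vcnt (U ∪ N) c a = vcnt U c a + vcnt N c a := by
  unfold vcnt
  rw [Finset.filter_union, Finset.card_union_of_disjoint (Finset.disjoint_filter_filter h)]

lemma vcnt_singleton (y : V) (c : V → K4) (a : K4) :
    vcnt {y} c a = if a = c y then 1 else 0 := by
  unfold vcnt
  rw [Finset.filter_singleton]
  by_cases h : c y = a
  · simp [h]
  · simp [h, Ne.symm h]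

lemma vcnt_insert {y : V} {N : Finset V} (h : y ∉ N) (c : V → K4) (a : K4) :
    vcnt (insert y N) c a = (if a = c y then 1 else 0) + vcnt N c a := by
  rw [Finset.insert_eq, vcnt_union (by simpa using h), vcnt_singleton]

/-- Any distribution with the right total is realised by some labeling of `N`. -/
lemma exists_labeling_s1 (N : Finset V) (c : V → K4) (g : K4 → ℕ) (hg : ∑ a, g a = N.card) :
    ∃ c' : V → K4, (∀ v, v ∉ N → c' v = c v) ∧ vcnt N c' = g := by
  induction N using Finset.induction_on generalizing g with
  | empty =>
    refine ⟨c, fun _ _ => rfl, ?_⟩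
    funext a
    have := (Finset.sum_eq_zero_iff.1 (hg.trans Finset.card_empty)) a (Finset.mem_univ a)
    simp [vcnt, this]
  | insert y N hy ih =>
    rw [Finset.card_insert_of_notMem hy] at hg
    obtain ⟨b, -, hb⟩ : ∃ b ∈ Finset.univ, g b ≠ 0 :=
      Finset.exists_ne_zero_of_sum_ne_zero (by rw [hg]; omega)
    have hsplit : ∀ a, g a = (g a - if a = b then 1 else 0) + if a = b then 1 else 0 := by
      intro a
      split_ifs with h
      · subst h; omega
      · omega
    obtain ⟨c', h1, h2⟩ := ih (fun a => g a - if a = b then 1 else 0) (by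
      rw [Finset.sum_congr rfl fun a _ => hsplit a, Finset.sum_add_distrib] at hg
      simp only [Finset.sum_ite_eq', Finset.mem_univ, if_true] at hg
      omega)
    refine ⟨Function.update c' y b, ?_, ?_⟩
    · intro v hv
      rw [Finset.mem_insert, not_or] at hv
      rw [Function.update_of_ne hv.1, h1 v hv.2]
    · funext a
      rw [vcnt_insert hy, Function.update_self, vcnt_congr (d := c'), h2]
      · exact (Nat.add_comm _ _).trans (hsplit a).symm
      · intro v hv
        exact Function.update_of_ne (fun h => hy (by rwa [← h])) _ _

/-- Attaching the edge `e` at `x`: the label distribution on vertices can be raised to any larger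
distribution `f'` of the right total, with labels `d` prescribed on a set `M` of new vertices as
long as they fit into the difference.  The label of the new edge depends only on the two
distributions and on the label of `x`. -/
lemma exists_attach {p : ℕ} {U : Finset V} {F : Finset (Finset V)} {e : Finset V} {x : V}
    (hF : ∀ g ∈ F, g ⊆ U) (heF : e ∉ F) (hcard : e.card = p) (hxU : x ∈ U) (hxe : x ∈ e)
    (hx : ∀ y ∈ e, y ∈ U → y = x) (c : V → K4) (f' : K4 → ℕ) (M : Finset V) (d : V → K4)
    (hM : M ⊆ e \ U) (hle : ∀ a, vcnt U c a + vcnt M d a ≤ f' a)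
    (hsum : ∑ a, f' a = U.card + (p - 1)) :
    ∃ c' : V → K4, (∀ v ∈ U, c' v = c v) ∧ (∀ v ∈ M, c' v = d v) ∧ vcnt (U ∪ e) c' = f' ∧
      ∀ a, ecnt (insert e F) c' a =
        ecnt F c a + if a = c x + wsum (vcnt U c) + wsum f' then 1 else 0 := by
  have hdisj : Disjoint U (e \ U) := Finset.disjoint_sdiff
  have hUe : U ∪ e = U ∪ (e \ U) := by simp
  have hcardU := card_attach hcard hxU hxe hx
  have hNM : ((e \ U) \ M).card + M.card = (e \ U).card :=
    Finset.card_sdiff_add_card_eq_card hM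
  have hNU : (U ∪ e).card = U.card + (e \ U).card := by
    rw [hUe, Finset.card_union_of_disjoint hdisj]
  obtain ⟨c', h1, h2⟩ := exists_labeling_s1 ((e \ U) \ M) (fun v => if v ∈ M then d v else c v)
    (fun a => f' a - (vcnt U c a + vcnt M d a)) (by
      have h3 : ∑ a, f' a =
          ∑ a, ((f' a - (vcnt U c a + vcnt M d a)) + (vcnt U c a + vcnt M d a)) :=
        Finset.sum_congr rfl fun a _ => by have := hle a; omega
      rw [Finset.sum_add_distrib, Finset.sum_add_distrib, sum_vcnt, sum_vcnt] at h3
      omega)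
  have hcU : ∀ v ∈ U, c' v = c v := by
    intro v hv
    rw [h1 v (by simp [hv]), if_neg]
    intro hvM
    exact (Finset.mem_sdiff.1 (hM hvM)).2 hv
  have hcM : ∀ v ∈ M, c' v = d v := by
    intro v hv
    rw [h1 v (by simp [hv]), if_pos hv]
  have hcnt : vcnt (U ∪ e) c' = f' := by
    funext a
    have hN : e \ U = (e \ U) \ M ∪ M := (Finset.sdiff_union_of_subset hM).symm
    rw [hUe, vcnt_union hdisj, hN, vcnt_union Finset.sdiff_disjoint, h2, vcnt_congr hcU,
      vcnt_congr hcM]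
    have := hle a
    dsimp only
    omega
  refine ⟨c', hcU, hcM, hcnt, ?_⟩
  have hlab : edgeSum c' e = c x + wsum (vcnt U c) + wsum f' := by
    have he : e = insert x (e \ U) := by
      ext y
      simp only [Finset.mem_insert, Finset.mem_sdiff]
      constructor
      · intro hy
        by_cases hyU : y ∈ U
        · exact Or.inl (hx y hy hyU)
        · exact Or.inr ⟨hy, hyU⟩
      · rintro (rfl | h)
        · exact hxe
        · exact h.1
    have h4 : edgeSum c' e = c x + ∑ v ∈ e \ U, c' v := by
      unfold edgeSum
      conv_lhs => rw [he]
      rw [Finset.sum_insert (by simp [hxU]), hcU x hxU]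
    have h5 : wsum f' = wsum (vcnt U c) + ∑ v ∈ e \ U, c' v := by
      rw [← hcnt, ← vcnt_congr hcU, wsum_vcnt, wsum_vcnt, hUe, Finset.sum_union hdisj]
    rw [h4, h5, add_assoc, K4_add_cancel]
  intro a
  have hold : F.filter (fun g => edgeSum c' g = a) = F.filter (fun g => edgeSum c g = a) := by
    refine Finset.filter_congr fun g hg => ?_
    have : edgeSum c' g = edgeSum c g := Finset.sum_congr rfl fun v hv => hcU v (hF g hg hv)
    rw [this]
  unfold ecnt
  rw [Finset.filter_insert, hold, hlab]
  by_cases ha : c x + wsum (vcnt U c) + wsum f' = a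
  · rw [if_pos ha, if_pos ha.symm, Finset.card_insert_of_notMem]
    simp [heF]
  · rw [if_neg ha, if_neg (Ne.symm ha), add_zero]

/-- The labeling `c` is cordial on `(U, F)`, in terms of balanced distributions. -/
def Good (U : Finset V) (F : Finset (Finset V)) (c : V → K4) : Prop :=
  Bal (vcnt U c) ∧ Bal (ecnt F c)

/-! ### Attaching one edge -/

/-- A cordial labeling extends over one further edge, unless `p ≡ 2` and `m ≡ 2` modulo `4`: in
that case the new distribution on vertices is constant and the label of the new edge is forced. -/
lemma good_step {p m : ℕ} (hp : 3 ≤ p) (hbad : ¬ (p % 4 = 2 ∧ m % 4 = 2)) {U : Finset V}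
    {F : Finset (Finset V)} {e : Finset V} {x : V} (hB : Built p m U F) (heF : e ∉ F)
    (hcard : e.card = p) (hxU : x ∈ U) (hxe : x ∈ e) (hx : ∀ y ∈ e, y ∈ U → y = x)
    {c : V → K4} (hc : Good U F c) : ∃ c', Good (U ∪ e) (insert e F) c' := by
  obtain ⟨hcv, hce⟩ := hc
  have hn := hB.card_verts
  have hsv := sum_vcnt U c
  have hse := sum_ecnt F c
  rw [hB.card_edges] at hse
  obtain ⟨q, s, hs, hqs⟩ : ∃ q s, s < 4 ∧ U.card = 4 * q + s :=
    ⟨U.card / 4, U.card % 4, by omega, by omega⟩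
  obtain ⟨q', t, ht, hqt⟩ : ∃ q' t, t < 4 ∧ U.card + (p - 1) = 4 * q' + t :=
    ⟨(U.card + (p - 1)) / 4, (U.card + (p - 1)) % 4, by omega, by omega⟩
  have hfb := hcv.bounds hs (hsv.trans hqs)
  -- It is enough to choose the labels `T` of higher multiplicity so that the edge label is minimal.
  suffices hT : ∃ T : Finset K4, T.card = t ∧ (∀ a, vcnt U c a ≤ lev q' T a) ∧
      ∀ b, ecnt F c (c x + wsum (vcnt U c) + ∑ a ∈ T, a) ≤ ecnt F c b by
    obtain ⟨T, hTc, hTle, hTmin⟩ := hT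
    obtain ⟨c', -, -, h3, h4⟩ := exists_attach hB.subset heF hcard hxU hxe hx c (lev q' T) ∅ c
      (by simp) (by simpa [vcnt] using hTle) (by rw [sum_lev, hTc, hqt])
    refine ⟨c', by rw [h3]; exact bal_lev _ _, ?_⟩
    rw [funext h4, wsum_lev]
    exact hce.add_min hTmin
  generalize c x + wsum (vcnt U c) = w
  have hs' : s = (1 + (m % 4) * ((p - 1) % 4)) % 4 := by
    have : s = U.card % 4 := by omega
    rw [this, hn, Nat.add_mod, Nat.mul_mod]
    simp [Nat.add_mod]
  obtain ⟨i, hi⟩ : ∃ i, i = m % 4 := ⟨_, rfl⟩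
  obtain ⟨r, hr⟩ : ∃ r, r = (p - 1) % 4 := ⟨_, rfl⟩
  rw [← hi, ← hr] at hs'
  have hi4 : i < 4 := by omega
  have hr4 : r < 4 := by omega
  have htst : t = (s + r) % 4 := by omega
  have hlev : ∀ (T : Finset K4), q < q' → ∀ a, vcnt U c a ≤ lev q' T a := by
    intro T hqq a
    have := (hfb a).2
    unfold lev
    omega
  obtain rfl | rfl | rfl | rfl : t = 0 ∨ t = 1 ∨ t = 2 ∨ t = 3 := by omega
  · -- The label is forced, but the edge labels are evenly distributed and any label will do.
    have hm : m % 4 = 0 := by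
      interval_cases i <;> interval_cases r <;> omega
    exact ⟨∅, rfl, hlev _ (by omega), fun b => (hce.const (by omega) _ _).le⟩
  · obtain ⟨l, hl⟩ := exists_min (ecnt F c)
    refine ⟨{w + l}, rfl, hlev _ (by omega), ?_⟩
    rw [Finset.sum_singleton, K4_add_cancel]
    exact hl
  · -- Every edge label except `w` is available.
    have hm : m % 4 ≤ 2 ∧ p % 4 ≠ 3 := by
      interval_cases i <;> interval_cases r <;> omega
    obtain ⟨l, hlw, hl⟩ := hce.exists_min_ne (by omega) w
    obtain ⟨T, hT2, hTs⟩ := exists_pair (w + l) (by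
      intro h0
      have := K4_add_cancel w l
      rw [h0, add_zero] at this
      exact hlw this.symm)
    refine ⟨T, hT2, hlev _ (by omega), ?_⟩
    rw [hTs, K4_add_cancel]
    exact hl
  · -- The missing label `w + l` determines the edge label `l`; it must not have multiplicity
    -- `q' + 1` already.
    obtain ⟨l, hlq, hl⟩ : ∃ l, vcnt U c (w + l) ≤ q' ∧ ∀ b, ecnt F c l ≤ ecnt F c b := by
      by_cases hall : ∀ a, vcnt U c a ≤ q'
      · obtain ⟨l, hl⟩ := exists_min (ecnt F c)
        exact ⟨l, hall _, hl⟩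
      push Not at hall
      obtain ⟨z, hz⟩ := hall
      have hz2 := hfb z
      have hs0 : s ≠ 0 := by
        rintro rfl
        have h5 := forall_K4.1 fun a => (hfb a).1
        have h6 : ∀ a, vcnt U c a = q := by
          have h7 : ∑ a, vcnt U c a = 4 * q := by omega
          rw [sum_K4] at h7
          rw [forall_K4]
          omega
        have := h6 z
        omega
      -- This leaves `p = 3` and `s = 1`.
      have hm : m % 4 ≤ 2 ∧ s = 1 ∧ q' = q := by
        interval_cases i <;> interval_cases r <;> omega
      obtain ⟨l, hlz, hl⟩ := hce.exists_min_ne (by omega) (w + z)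
      refine ⟨l, ?_, hl⟩
      by_contra! hcon
      have hne : w + l ≠ z := by
        rintro rfl
        exact hlz (K4_add_cancel w l).symm
      have h8 : vcnt U c (w + l) + vcnt U c z ≤ 2 * q + 1 := by
        have h9 : ∑ a, (vcnt U c a - q) = 1 := by
          have h10 : ∑ a, vcnt U c a = ∑ a, ((vcnt U c a - q) + q) :=
            Finset.sum_congr rfl fun a _ => by have := (hfb a).1; omega
          rw [Finset.sum_add_distrib] at h10
          simp only [Finset.sum_const, Finset.card_univ, smul_eq_mul] at h10
          have : Fintype.card K4 = 4 := rfl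
          rw [this] at h10
          omega
        have h11 := Finset.sum_le_univ_sum_of_nonneg (s := {w + l, z})
          (f := fun a => vcnt U c a - q) (fun _ => Nat.zero_le _)
        rw [Finset.sum_pair hne] at h11
        omega
      omega
    refine ⟨{w + l}ᶜ, card_compl_K4 _, ?_, ?_⟩
    · intro a
      unfold lev
      by_cases ha : a = w + l
      · subst ha
        omega
      · have : a ∈ ({w + l}ᶜ : Finset K4) := by simpa using ha
        rw [if_pos this]
        have := (hfb a).2
        omega
    · rw [sum_compl, K4_add_cancel]
      exact hl

/-! ### Attaching three edges when `p ≡ 2` modulo `4` -/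

lemma pick_first (w l : K4) (T : Finset K4) (hT : T.card = 2) :
    ∃ z, z ∉ T ∧ w + z ≠ l := by
  revert w l T
  decide

lemma pick_ne (z l l' : K4) : ∃ b : K4, b + z ≠ l ∧ b + z ≠ l' := by
  revert z l l'
  decide

lemma pick_compl (u v l : K4) : ∃ z : K4, u + z ≠ l ∧ v + z ≠ l := by
  revert u v l
  decide

lemma pick_sum (u : K4) : ∃ T : Finset K4, T.card = 2 ∧ ∑ a ∈ T, a ≠ u := by
  revert u
  decide

lemma pick_mem {T : Finset K4} (hT : T.card = 2) (u : K4) : ∃ b ∈ T, b ≠ u :=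
  Finset.exists_mem_ne (by omega) u

/-- Three distinct edge labels added to a constant distribution leave it balanced. -/
lemma bal_three {h : K4 → ℕ} (hh : ∀ a b, h a = h b) {l1 l2 l3 : K4} (h12 : l2 ≠ l1)
    (h13 : l3 ≠ l1) (h23 : l3 ≠ l2) :
    Bal (fun a => h a + (if a = l1 then 1 else 0) + (if a = l2 then 1 else 0) +
      if a = l3 then 1 else 0) := by
  intro a b
  have := hh a b
  dsimp only
  split_ifs <;> first | omega | (subst_vars; contradiction)

/-- When `p ≡ 2` and `m ≡ 0` modulo `4`, a cordial labeling extends over three further edges.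
The vertex distributions after the three steps are determined by a pair `T`, a missing label `z`
and the empty set, so the labels of the second and third edges are `c x₂ + ∑ T + z` and `c x₃ + z`.
If `x₃` is not a new vertex of the second edge, it suffices to make
`∑ T ≠ c x₂ + c x₃` when labeling the first edge; otherwise `c x₃` can be chosen freely. -/
lemma good_triple {p m : ℕ} (hp : 3 ≤ p) (hp2 : p % 4 = 2) (hm : m % 4 = 0) {U : Finset V}
    {F : Finset (Finset V)} {e1 e2 e3 : Finset V} {x1 x2 x3 : V} (hB : Built p m U F)
    (he1 : e1 ∉ F) (hc1 : e1.card = p) (hxU1 : x1 ∈ U) (hxe1 : x1 ∈ e1)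
    (hx1 : ∀ y ∈ e1, y ∈ U → y = x1)
    (he2 : e2 ∉ insert e1 F) (hc2 : e2.card = p) (hxU2 : x2 ∈ U ∪ e1) (hxe2 : x2 ∈ e2)
    (hx2 : ∀ y ∈ e2, y ∈ U ∪ e1 → y = x2)
    (he3 : e3 ∉ insert e2 (insert e1 F)) (hc3 : e3.card = p) (hxU3 : x3 ∈ U ∪ e1 ∪ e2)
    (hxe3 : x3 ∈ e3) (hx3 : ∀ y ∈ e3, y ∈ U ∪ e1 ∪ e2 → y = x3)
    {c : V → K4} (hc : Good U F c) :
    ∃ c', Good (U ∪ e1 ∪ e2 ∪ e3) (insert e3 (insert e2 (insert e1 F))) c' := by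
  obtain ⟨hcv, hce⟩ := hc
  have hB1 := Built.attach e1 x1 hB he1 hc1 hxU1 hxe1 hx1
  have hB2 := Built.attach e2 x2 hB1 he2 hc2 hxU2 hxe2 hx2
  have hn := hB.card_verts
  have hn1 := card_attach hc1 hxU1 hxe1 hx1
  have hn2 := card_attach hc2 hxU2 hxe2 hx2
  have hse := sum_ecnt F c
  rw [hB.card_edges] at hse
  have hconst := hce.const (by omega)
  -- `p = 4 * j + 2` with `1 ≤ j`, and `U` has `4 * q + 1` vertices.
  obtain ⟨j, hj⟩ : ∃ j, p = 4 * j + 2 := ⟨p / 4, by omega⟩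
  have hj1 : 1 ≤ j := by omega
  obtain ⟨k, hk⟩ : ∃ k, m = 4 * k := ⟨m / 4, by omega⟩
  obtain ⟨q, hq⟩ : ∃ q, U.card = 4 * q + 1 :=
    ⟨k * (p - 1), by rw [hn, hk, mul_assoc]; omega⟩
  have hfb := hcv.bounds (s := 1) (by omega) ((sum_vcnt U c).trans hq)
  -- The first edge.
  have first : ∀ (T : Finset K4) (M : Finset V) (d : V → K4), T.card = 2 → M ⊆ e1 \ U →
      (∀ a, vcnt U c a + vcnt M d a ≤ lev (q + j) T a) → ∃ c1 : V → K4,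
      (∀ v ∈ U, c1 v = c v) ∧ (∀ v ∈ M, c1 v = d v) ∧ vcnt (U ∪ e1) c1 = lev (q + j) T ∧
      ∃ l1, ∀ a, ecnt (insert e1 F) c1 a = ecnt F c a + if a = l1 then 1 else 0 := by
    intro T M d hT hM hle
    obtain ⟨c1, h1, h2, h3, h4⟩ := exists_attach hB.subset he1 hc1 hxU1 hxe1 hx1 c
      (lev (q + j) T) M d hM hle (by rw [sum_lev, hT]; omega)
    exact ⟨c1, h1, h2, h3, _, h4⟩
  -- The second edge.
  have second : ∀ (c1 : V → K4) (T : Finset K4) (z : K4) (M : Finset V) (d : V → K4),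
      T.card = 2 → vcnt (U ∪ e1) c1 = lev (q + j) T → M ⊆ e2 \ (U ∪ e1) →
      (∀ a, lev (q + j) T a + vcnt M d a ≤ lev (q + 2 * j) {z}ᶜ a) → ∃ c2 : V → K4,
      (∀ v ∈ U ∪ e1, c2 v = c1 v) ∧ (∀ v ∈ M, c2 v = d v) ∧
      vcnt (U ∪ e1 ∪ e2) c2 = lev (q + 2 * j) {z}ᶜ ∧
      ∀ a, ecnt (insert e2 (insert e1 F)) c2 a =
        ecnt (insert e1 F) c1 a + if a = c1 x2 + ∑ b ∈ T, b + z then 1 else 0 := by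
    intro c1 T z M d hT hv hM hle
    obtain ⟨c2, h1, h2, h3, h4⟩ := exists_attach hB1.subset he2 hc2 hxU2 hxe2 hx2 c1
      (lev (q + 2 * j) {z}ᶜ) M d hM (by rw [hv]; exact hle)
      (by rw [sum_lev, card_compl_K4]; omega)
    rw [hv, wsum_lev, wsum_lev, sum_compl] at h4
    exact ⟨c2, h1, h2, h3, h4⟩
  -- The third edge.
  have third : ∀ (c2 : V → K4) (z : K4),
      vcnt (U ∪ e1 ∪ e2) c2 = lev (q + 2 * j) {z}ᶜ → ∃ c3 : V → K4,
      Bal (vcnt (U ∪ e1 ∪ e2 ∪ e3) c3) ∧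
      ∀ a, ecnt (insert e3 (insert e2 (insert e1 F))) c3 a =
        ecnt (insert e2 (insert e1 F)) c2 a + if a = c2 x3 + z then 1 else 0 := by
    intro c2 z hv
    obtain ⟨c3, -, -, h3, h4⟩ := exists_attach hB2.subset he3 hc3 hxU3 hxe3 hx3 c2
      (lev (q + 3 * j + 1) ∅) ∅ c2 (by simp)
      (by
        intro a
        rw [hv]
        simp only [lev, vcnt, Finset.filter_empty, Finset.card_empty]
        split_ifs <;> omega)
      (by rw [sum_lev, Finset.card_empty]; omega)
    rw [hv, wsum_lev, wsum_lev, sum_compl, Finset.sum_empty, add_zero] at h4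
    exact ⟨c3, by rw [h3]; exact bal_lev _ _, h4⟩
  have hempty : ∀ a, vcnt (∅ : Finset V) c a = 0 := fun a => by simp [vcnt]
  by_cases hx3U : x3 ∈ U ∪ e1
  · -- Choose the first step so that the second and third edge labels differ for every `z`.
    obtain ⟨T, c1, hT, hv1, hne, l1, hl1⟩ : ∃ (T : Finset K4) (c1 : V → K4), T.card = 2 ∧
        vcnt (U ∪ e1) c1 = lev (q + j) T ∧ ∑ a ∈ T, a ≠ c1 x2 + c1 x3 ∧
        ∃ l1, ∀ a, ecnt (insert e1 F) c1 a = ecnt F c a + if a = l1 then 1 else 0 := by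
      -- The case of one new and one old vertex.
      have mixed : ∀ y y' : V, y ∈ e1 \ U → y' ∈ U → ∃ (T : Finset K4) (c1 : V → K4),
          T.card = 2 ∧ vcnt (U ∪ e1) c1 = lev (q + j) T ∧ ∑ a ∈ T, a ≠ c1 y + c1 y' ∧
          ∃ l1, ∀ a, ecnt (insert e1 F) c1 a = ecnt F c a + if a = l1 then 1 else 0 := by
        intro y y' hy hy'
        obtain ⟨T, hT, -⟩ := pick_sum 0
        obtain ⟨b, hbT, hb⟩ := pick_mem hT (∑ a ∈ T, a + c y')
        obtain ⟨c1, h1, h2, h3, h4⟩ := first T {y} (fun _ => b) hT (by simpa using hy) (by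
          intro a
          rw [vcnt_singleton]
          have := (hfb a).2
          unfold lev
          by_cases hab : a = b
          · subst hab
            simp only [if_pos hbT, if_true]
            omega
          · rw [if_neg hab]
            omega)
        refine ⟨T, c1, hT, h3, ?_, h4⟩
        rw [h1 y' hy', h2 y (by simp)]
        intro h
        apply hb
        rw [h, add_assoc, K4_add_self, add_zero]
      by_cases h2U : x2 ∈ U <;> by_cases h3U : x3 ∈ U
      · obtain ⟨T, hT, hTs⟩ := pick_sum (c x2 + c x3)
        obtain ⟨c1, h1, -, h3, h4⟩ := first T ∅ c hT (by simp) (by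
          intro a
          rw [hempty]
          have := (hfb a).2
          unfold lev
          omega)
        exact ⟨T, c1, hT, h3, by rwa [h1 x2 h2U, h1 x3 h3U], h4⟩
      · obtain ⟨T, c1, h1, h2, h3, h4⟩ := mixed x3 x2
          (Finset.mem_sdiff.2 ⟨(Finset.mem_union.1 hx3U).resolve_left h3U, h3U⟩) h2U
        exact ⟨T, c1, h1, h2, by rwa [add_comm], h4⟩
      · exact mixed x2 x3
          (Finset.mem_sdiff.2 ⟨(Finset.mem_union.1 hxU2).resolve_left h2U, h2U⟩) h3U
      · -- Both vertices are new: give them a common label `b` of multiplicity `q` on `U`.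
        obtain ⟨b, hb⟩ : ∃ b, vcnt U c b ≤ q := by
          by_contra! hcon
          have h5 := forall_K4.1 hcon
          have h6 := (sum_vcnt U c).trans hq
          rw [sum_K4] at h6
          omega
        obtain ⟨b', hb'⟩ : ∃ b' : K4, b' ≠ b := exists_ne b
        have hT : ({b, b'} : Finset K4).card = 2 := Finset.card_pair hb'.symm
        obtain ⟨c1, -, h2, h3, h4⟩ := first {b, b'} {x2, x3} (fun _ => b) hT (by
            intro v hv
            rw [Finset.mem_insert, Finset.mem_singleton] at hv
            rcases hv with rfl | rfl
            · exact Finset.mem_sdiff.2 ⟨(Finset.mem_union.1 hxU2).resolve_left h2U, h2U⟩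
            · exact Finset.mem_sdiff.2 ⟨(Finset.mem_union.1 hx3U).resolve_left h3U, h3U⟩) (by
            intro a
            have h7 := (hfb a).2
            unfold lev
            by_cases hab : a = b
            · subst hab
              have h8 : vcnt ({x2, x3} : Finset V) (fun _ => a) a ≤ 2 :=
                (Finset.card_filter_le _ _).trans Finset.card_le_two
              rw [if_pos (by simp)]
              omega
            · have h8 : vcnt ({x2, x3} : Finset V) (fun _ => b) a = 0 := by
                simp [vcnt, Ne.symm hab]
              rw [h8]
              omega)
        refine ⟨_, c1, hT, h3, ?_, h4⟩
        rw [h2 x2 (by simp), h2 x3 (by simp), K4_add_self]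
        exact pair_sum_ne hT
    obtain ⟨z, hz2, hz3⟩ := pick_compl (c1 x2 + ∑ a ∈ T, a) (c1 x3) l1
    obtain ⟨c2, h1, -, h3, h4⟩ := second c1 T z ∅ c hT hv1 (by simp) (by
      intro a
      rw [hempty]
      unfold lev
      split_ifs <;> omega)
    obtain ⟨c3, g1, g2⟩ := third c2 z h3
    refine ⟨c3, g1, ?_⟩
    rw [funext g2]
    simp only [h4, hl1, h1 x3 hx3U]
    refine bal_three hconst hz2 hz3 ?_
    intro h
    apply hne
    have h5 : c1 x3 = c1 x2 + ∑ a ∈ T, a := add_right_cancel h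
    rw [h5, K4_add_cancel]
  · have hx3e : x3 ∈ e2 \ (U ∪ e1) :=
      Finset.mem_sdiff.2 ⟨(Finset.mem_union.1 hxU3).resolve_left hx3U, hx3U⟩
    obtain ⟨T, hT, -⟩ := pick_sum 0
    obtain ⟨c1, -, -, hv1, l1, hl1⟩ := first T ∅ c hT (by simp) (by
      intro a
      rw [hempty]
      have := (hfb a).2
      unfold lev
      omega)
    -- As `z ∉ T`, every label occurs among the new vertices of the second edge.
    obtain ⟨z, hzT, hz⟩ := pick_first (c1 x2 + ∑ a ∈ T, a) l1 T hT
    obtain ⟨b, hb1, hb2⟩ := pick_ne z l1 (c1 x2 + ∑ a ∈ T, a + z)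
    obtain ⟨c2, -, h2, h3, h4⟩ := second c1 T z {x3} (fun _ => b) hT hv1 (by simpa using hx3e) (by
      intro a
      rw [vcnt_singleton]
      unfold lev
      by_cases haz : a = z
      · subst haz
        rw [if_neg hzT]
        split_ifs <;> omega
      · rw [if_pos (show a ∈ ({z}ᶜ : Finset K4) by simpa using haz)]
        split_ifs <;> omega)
    obtain ⟨c3, g1, g2⟩ := third c2 z h3
    refine ⟨c3, g1, ?_⟩
    rw [funext g2]
    simp only [h4, hl1, h2 x3 (by simp)]
    exact bal_three hconst hz hb1 hb2

lemma Built.good {p : ℕ} (hp : 3 ≤ p) : ∀ (m : ℕ) {U : Finset V} {F : Finset (Finset V)},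
    Built p m U F → ∃ c, Good U F c := by
  intro m
  induction m using Nat.strong_induction_on with
  | _ m ih =>
    intro U F hB
    cases hB with
    | single v =>
      refine ⟨fun _ => 0, ?_, ?_⟩
      · intro a b
        rw [vcnt_singleton]
        split_ifs <;> omega
      · intro a b
        simp [ecnt]
    | @attach m2 U2 F2 e3 x3 hB2 he3 hc3 hxU3 hxe3 hx3 =>
      by_cases hbad : p % 4 = 2 ∧ m2 % 4 = 2
      · cases hB2 with
        | single v => omega
        | @attach m1 U1 F1 e2 x2 hB1 he2 hc2 hxU2 hxe2 hx2 =>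
          cases hB1 with
          | single v => omega
          | @attach m0 U0 F0 e1 x1 hB0 he1 hc1 hxU1 hxe1 hx1 =>
            obtain ⟨c, hc⟩ := ih m0 (by omega) hB0
            exact good_triple hp hbad.1 (by omega) hB0 he1 hc1 hxU1 hxe1 hx1 he2 hc2 hxU2 hxe2
              hx2 he3 hc3 hxU3 hxe3 hx3 hc
      · obtain ⟨c, hc⟩ := ih m2 (by omega) hB2
        exact good_step hp hbad hB2 he3 hc3 hxU3 hxe3 hx3 hc

end Labeling

lemma Bal.abs_sub_le {f : K4 → ℕ} (hf : Bal f) (a b : K4) : |(f a : ℤ) - (f b : ℤ)| ≤ 1 := by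
  have h1 := hf a b
  have h2 := hf b a
  rw [abs_le]
  omega

/-- Let `p ≥ 3`. Then every `p`-uniform hypertree is `Z₂×Z₂`-cordial. -/
theorem uniform_hypertree_cordial {V : Type*} [DecidableEq V] (p : ℕ) (hp : 3 ≤ p)
    (Vs : Finset V) (E : Finset (Finset V))
    (htree : Hypertree Vs E) (hunif : ∀ e ∈ E, e.card = p) :
    Cordial Vs E := by
  obtain ⟨c, hv, he⟩ := (htree.built hunif).good hp
  exact ⟨c, hv.abs_sub_le, he.abs_sub_le⟩
end

section
/- Every star hypergraph is (Z₂×Z₂)-cordial. -/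
/-!
Deleting the center `z` turns a star into disjoint nonempty blocks, and the label of `z` merely
translates all edge labels. So only the multiset `L` of block sizes matters: `L` is realizable
(`Realizable`) if one can choose, for each size, a multiset of labels of that size such that all
chosen labels together with one extra label (for `z`) are balanced and the block sums are balanced.

Realizability is proved by strong induction on the total size.

* A block of size `s ≥ 5` may be shortened by `4`: the four group elements, one of each, are
  balanced and have sum `0` (`Realizable.add_four`).
* Four blocks with sizes in `{1, 2, 3, 4}` and total size divisible by `4` may be deleted: they
  can be labeled so that every label occurs equally often and every block sum occurs exactly once
  (`gadgets`, `Realizable.add_gadget`).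

If neither step applies, every size lies in `{1, 2, 3, 4}` and occurs at most three times. Only
finitely many such `L` contain no gadget, and a backtracking search settles them (`base_check`).
-/

open Finset

open Finset

/-- All labels occur equally often in `M`, up to a difference of one. -/
def BalancedLabels (M : Multiset K4) : Prop := ∀ a b : K4, M.count a ≤ M.count b + 1

instance (M : Multiset K4) : Decidable (BalancedLabels M) :=
  inferInstanceAs (Decidable (∀ a b : K4, M.count a ≤ M.count b + 1))

/-- Blocks of the sizes listed in `L` can be labeled (block by block, as the multisets in `B`) so
that the block sums are balanced and the labels used are balanced once the label `z₀` of the center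
is added. -/
def Realizable (L : Multiset ℕ) : Prop :=
  ∃ (B : Multiset (Multiset K4)) (z₀ : K4), B.map Multiset.card = L ∧
    BalancedLabels (z₀ ::ₘ B.sum) ∧ BalancedLabels (B.map Multiset.sum)

/-! ### Reduction steps -/

theorem Realizable.add_four {s : ℕ} {L : Multiset ℕ} (h : Realizable (s ::ₘ L)) :
    Realizable ((s + 4) ::ₘ L) := by
  obtain ⟨B, z₀, hB, hv, he⟩ := h
  obtain ⟨b, hb, hbs, hBL⟩ := (Multiset.map_eq_cons _ _ _ _).2 hB
  obtain ⟨B', rfl⟩ := Multiset.exists_cons_of_mem hb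
  rw [Multiset.erase_cons_head] at hBL
  have hcount : ∀ a : K4, (univ : Finset K4).val.count a = 1 := by decide
  have hsum : (univ : Finset K4).val.sum = 0 := by decide
  have hcard : Multiset.card (univ : Finset K4).val = 4 := by decide
  refine ⟨(b + (univ : Finset K4).val) ::ₘ B', z₀, ?_, ?_, ?_⟩
  · rw [Multiset.map_cons, Multiset.card_add, hcard, hbs, hBL]
  · intro x y
    have := hv x y
    simp only [Multiset.sum_cons, Multiset.count_cons, Multiset.count_add, hcount] at this ⊢
    omega
  · simpa [hsum] using he

/-- Labeled quadruples of blocks, one for every quadruple of sizes in `{1, 2, 3, 4}` whose total is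
divisible by `4`. -/
def gadgets : List (List (List K4)) :=
  let o : K4 := (0, 0)
  let a : K4 := (0, 1)
  let b : K4 := (1, 0)
  let c : K4 := (1, 1)
  [[[o], [a], [b], [c]],
   [[o, o], [a, b], [a, c], [b, c]],
   [[o, o, o], [a, a, a], [b, b, b], [c, c, c]],
   [[o, o, o, o], [a, a, a, b], [a, b, b, c], [b, c, c, c]],
   [[o, o, a, a], [b, c], [b], [c]],
   [[o, o, a], [a, b, c], [b], [c]],
   [[o, o, a], [a, b], [c, c], [b]],
   [[o, o, o, a], [a, a, b, b], [b, c, c], [c]],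
   [[o, o, o, a], [a, b, b, b], [a, c], [c, c]],
   [[o, o, o, a], [a, a, b], [b, b, c], [c, c]]]

/-- The block sizes of a labeled family of blocks. -/
def sizes (G : List (List K4)) : Multiset ℕ := (G.map List.length : List ℕ)

theorem gadgets_spec : ∀ G ∈ gadgets,
    (∀ x y : K4, (Multiset.ofList G.flatten).count x = (Multiset.ofList G.flatten).count y) ∧
      ∀ x : K4, (Multiset.ofList (G.map List.sum)).count x = 1 := by
  decide +kernel

theorem gadgets_sum_pos : ∀ G ∈ gadgets, 0 < (sizes G).sum := by
  decide +kernel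

theorem sum_map_coe (G : List (List K4)) :
    (Multiset.ofList (G.map Multiset.ofList)).sum = Multiset.ofList G.flatten := by
  induction G with
  | nil => rfl
  | cons l G ih =>
    rw [List.map_cons, ← Multiset.cons_coe, Multiset.sum_cons, ih, List.flatten_cons,
      Multiset.coe_add]

theorem Realizable.add_gadget {L : Multiset ℕ} (h : Realizable L) {G : List (List K4)}
    (hG : G ∈ gadgets) : Realizable (L + sizes G) := by
  obtain ⟨B, z₀, hB, hv, he⟩ := h
  obtain ⟨h1, h2⟩ := gadgets_spec G hG
  refine ⟨B + Multiset.ofList (G.map Multiset.ofList), z₀, ?_, ?_, ?_⟩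
  · rw [Multiset.map_add, hB, Multiset.map_coe, List.map_map]
    rfl
  · intro x y
    have := hv x y
    have := h1 x y
    simp only [Multiset.sum_add, sum_map_coe, Multiset.count_cons, Multiset.count_add] at *
    omega
  · intro x y
    have := he x y
    have hx := h2 x
    have hy := h2 y
    have hcomp : (Multiset.sum ∘ Multiset.ofList : List K4 → K4) = List.sum := by
      funext l; exact Multiset.sum_coe l
    rw [Multiset.map_add, Multiset.map_coe, List.map_map, hcomp, Multiset.count_add,
      Multiset.count_add]
    omega

/-! ### The finitely many irreducible size multisets -/

/-- All multisets of size `n` over the given alphabet, each written as one list. -/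
def blocks : List K4 → ℕ → List (List K4)
  | [], 0 => [[]]
  | [], _ + 1 => []
  | x :: l, n => (List.range (n + 1)).flatMap fun j =>
      (blocks l j).map fun w => List.replicate (n - j) x ++ w

/-- The elements of the Klein four-group, as a list. -/
def labels : List K4 := [(0, 0), (0, 1), (1, 0), (1, 1)]

/-- Backtracking search for labels of blocks with sizes `L`, where `M` holds the labels and `S` the
block sums chosen so far. Branches in which a label occurs more than `p` times in `M`, or more than
`q` times in `S`, are pruned. -/
def search (p q : ℕ) : List ℕ → List K4 → List K4 → Bool
  | [], M, S => decide (∃ z₀ ∈ labels, BalancedLabels (z₀ ::ₘ (M : Multiset K4))) &&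
      decide (BalancedLabels (S : Multiset K4))
  | s :: L, M, S => (blocks labels s).any fun b =>
      (b.length == s) && labels.all (fun x => (b ++ M).count x ≤ p) &&
      labels.all (fun x => (b.sum :: S).count x ≤ q) && search p q L (b ++ M) (b.sum :: S)

theorem search_sound (p q : ℕ) (L : List ℕ) (M S : List K4) (h : search p q L M S = true) :
    ∃ (B : Multiset (Multiset K4)) (z₀ : K4), B.map Multiset.card = L ∧
      BalancedLabels (z₀ ::ₘ (B.sum + M)) ∧ BalancedLabels (B.map Multiset.sum + S) := by
  induction L generalizing M S with
  | nil =>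
    simp only [search, Bool.and_eq_true, decide_eq_true_eq] at h
    obtain ⟨⟨z₀, -, h1⟩, h2⟩ := h
    exact ⟨0, z₀, by simp, by simpa using h1, by simpa using h2⟩
  | cons s L ih =>
    rw [search, List.any_eq_true] at h
    obtain ⟨b, -, hb⟩ := h
    simp only [Bool.and_eq_true, beq_iff_eq] at hb
    obtain ⟨⟨⟨hlen, -⟩, -⟩, hrec⟩ := hb
    obtain ⟨B, z₀, h1, h2, h3⟩ := ih _ _ hrec
    refine ⟨(b : Multiset K4) ::ₘ B, z₀, ?_, ?_, ?_⟩
    · rw [Multiset.map_cons, h1, Multiset.coe_card, hlen, Multiset.cons_coe]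
    · have e : ((b : Multiset K4) ::ₘ B).sum + (M : Multiset K4)
          = B.sum + ((b ++ M : List K4) : Multiset K4) := by
        rw [Multiset.sum_cons, ← Multiset.coe_add, add_left_comm, add_assoc]
      rwa [e]
    · have e : ((b : Multiset K4) ::ₘ B).map Multiset.sum + (S : Multiset K4)
          = B.map Multiset.sum + ((b.sum :: S : List K4) : Multiset K4) := by
        rw [Multiset.map_cons, Multiset.sum_coe, ← Multiset.cons_coe, Multiset.cons_add,
          Multiset.add_cons]
      rwa [e]

/-- The decreasing list with `nᵢ` entries equal to `i`, for `i = 1, 2, 3, 4`. -/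
def sizeList (n₁ n₂ n₃ n₄ : ℕ) : List ℕ :=
  List.replicate n₄ 4 ++ (List.replicate n₃ 3 ++ (List.replicate n₂ 2 ++ List.replicate n₁ 1))

/-- Every size multiset with at most three entries of each size contains a gadget or is settled by
the search. The pruning bounds are the class sizes, rounded up, of a balanced labeling of all vertices
(center included) and of all edges. -/
theorem base_check : ∀ n₁ < 4, ∀ n₂ < 4, ∀ n₃ < 4, ∀ n₄ < 4,
    (∃ G ∈ gadgets, sizes G ≤ (sizeList n₁ n₂ n₃ n₄ : Multiset ℕ)) ∨
    search (((sizeList n₁ n₂ n₃ n₄).sum + 4) / 4) (((sizeList n₁ n₂ n₃ n₄).length + 3) / 4)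
      (sizeList n₁ n₂ n₃ n₄) [] [] = true := by
  decide +kernel

theorem eq_sizeList {L : Multiset ℕ} (h : ∀ s ∈ L, 1 ≤ s ∧ s ≤ 4) :
    L = (sizeList (L.count 1) (L.count 2) (L.count 3) (L.count 4) : Multiset ℕ) := by
  ext s
  simp only [sizeList, Multiset.coe_count, List.count_append, List.count_replicate, beq_iff_eq]
  by_cases hs : s ∈ L
  · obtain ⟨h1, h2⟩ := h s hs
    interval_cases s <;> simp
  · rw [Multiset.count_eq_zero_of_notMem hs]
    split_ifs <;> simp_all

theorem replicate_four_gadget : ∀ i ∈ Finset.Icc 1 4,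
    ∃ G ∈ gadgets, sizes G = Multiset.replicate 4 i := by
  decide +kernel

theorem realizable (L : Multiset ℕ) (hL : ∀ s ∈ L, 1 ≤ s) : Realizable L := by
  induction hn : L.sum using Nat.strong_induction_on generalizing L with
  | _ n ih =>
    subst hn
    by_cases hbig : ∃ s ∈ L, 5 ≤ s
    · obtain ⟨s, hs, hs5⟩ := hbig
      obtain ⟨L', rfl⟩ := Multiset.exists_cons_of_mem hs
      obtain ⟨t, rfl⟩ : ∃ t, s = t + 4 := ⟨s - 4, by omega⟩
      refine Realizable.add_four (ih _ ?_ _ ?_ rfl)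
      · simp
      · intro u hu
        rcases Multiset.mem_cons.1 hu with rfl | hu
        · omega
        · exact hL u (Multiset.mem_cons_of_mem hu)
    by_cases hgad : ∃ G ∈ gadgets, sizes G ≤ L
    · obtain ⟨G, hG, hle⟩ := hgad
      have hsplit := Multiset.sub_add_cancel hle
      rw [← hsplit]
      refine Realizable.add_gadget (ih _ ?_ _ ?_ rfl) hG
      · conv_rhs => rw [← hsplit, Multiset.sum_add]
        have := gadgets_sum_pos G hG
        omega
      · exact fun u hu => hL u (Multiset.mem_of_le (Multiset.sub_le_self _ _) hu)
    push Not at hbig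
    have hcount : ∀ i ∈ Finset.Icc 1 4, L.count i < 4 := by
      intro i hi
      by_contra! hge
      obtain ⟨G, hG, hGi⟩ := replicate_four_gadget i hi
      exact hgad ⟨G, hG, hGi ▸ Multiset.le_count_iff_replicate_le.1 hge⟩
    have hL' := eq_sizeList (L := L) fun s hs => ⟨hL s hs, by have := hbig s hs; omega⟩
    rcases base_check _ (hcount 1 (by simp)) _ (hcount 2 (by simp)) _ (hcount 3 (by simp))
      _ (hcount 4 (by simp)) with h | h
    · rw [← hL'] at h
      exact absurd h hgad
    · obtain ⟨B, z₀, h1, h2, h3⟩ := search_sound _ _ _ _ _ h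
      rw [← hL'] at h1
      exact ⟨B, z₀, h1, by simpa using h2, by simpa using h3⟩

/-! ### From size multisets to stars -/

/-- If the `g`-values on `s` and the `h`-values on `B` agree as multisets, then `B` is the image of
`s` under a map that matches these values. -/
theorem exists_matching {α β γ : Type*} [DecidableEq α] (s : Finset α) (g : α → γ) (h : β → γ)
    (B : Multiset β) (hB : B.map h = s.val.map g) [Inhabited β] :
    ∃ f : α → β, s.val.map f = B ∧ ∀ x ∈ s, h (f x) = g x := by
  classical
  induction s using Finset.induction_on generalizing B with
  | empty => exact ⟨fun _ => default, by simpa using (Multiset.map_eq_zero.1 hB).symm, by simp⟩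
  | insert x s hx ih =>
    rw [Finset.insert_val_of_notMem hx, Multiset.map_cons] at hB
    obtain ⟨b, hb, hbx, hB'⟩ := (Multiset.map_eq_cons _ _ _ _).2 hB
    obtain ⟨f, hf, hfs⟩ := ih _ hB'
    have hne : ∀ y ∈ s, y ≠ x := fun y hy hyx => hx (hyx ▸ hy)
    refine ⟨Function.update f x b, ?_, ?_⟩
    · rw [Finset.insert_val_of_notMem hx, Multiset.map_cons, Function.update_self,
        Multiset.map_congr rfl fun y hy => Function.update_of_ne (hne y hy) b f, hf,
        Multiset.cons_erase hb]
    · intro y hy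
      rcases Finset.mem_insert.1 hy with rfl | hy
      · simpa using hbx
      · rw [Function.update_of_ne (hne y hy)]
        exact hfs y hy

theorem exists_labeling_s2 {α β : Type*} [DecidableEq α] [Inhabited β] (s : Finset α)
    (B : Multiset β) (hB : Multiset.card B = s.card) : ∃ f : α → β, s.val.map f = B := by
  obtain ⟨f, hf, -⟩ := exists_matching s (fun _ => ()) (fun _ => ()) B (by simp [hB])
  exact ⟨f, hf⟩

theorem card_filter_eq_count {α : Type*} (s : Finset α) (f : α → K4) (a : K4) :
    (s.filter fun x => f x = a).card = (s.val.map f).count a := by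
  rw [Multiset.count_map, Finset.card_def, Finset.filter_val]
  simp only [eq_comm]

theorem BalancedLabels.abs_le {M : Multiset K4} (h : BalancedLabels M) (a b : K4) :
    |(M.count a : ℤ) - (M.count b : ℤ)| ≤ 1 := by
  have h1 := h a b
  have h2 := h b a
  rw [_root_.abs_le]
  omega

theorem BalancedLabels.translate {M : Multiset K4} (h : BalancedLabels M) (t : K4) :
    BalancedLabels (M.map (t + ·)) := by
  intro a b
  have key : ∀ a : K4, (M.map (t + ·)).count a = M.count (a - t) := fun a => by
    conv_lhs => rw [← add_sub_cancel t a]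
    exact Multiset.count_map_eq_count' _ _ (add_right_injective t) _
  rw [key, key]
  exact h _ _

/-- Every star hypergraph is `Z₂×Z₂`-cordial.  A star has a center vertex `z`
contained in all edges, the edges (each of size at least 2) pairwise intersect
exactly in the center, and every vertex lies in some edge (except possibly the
degenerate case handled by `hz`). -/
theorem star_cordial {V : Type*} [DecidableEq V] (Vs : Finset V)
    (E : Finset (Finset V)) (z : V)
    (hz : z ∈ Vs)
    (hsub : ∀ e ∈ E, e ⊆ Vs)
    (hcard : ∀ e ∈ E, 2 ≤ e.card)
    (hcenter : ∀ e ∈ E, z ∈ e)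
    (hdisj : ∀ e ∈ E, ∀ f ∈ E, e ≠ f → e ∩ f = {z})
    (hcover : ∀ v ∈ Vs, ∃ e ∈ E, v ∈ e) :
    Cordial Vs E := by
  classical
  obtain ⟨B, z₀, hB, hv, he⟩ := realizable (E.val.map fun e => (e.erase z).card) (by
    intro s hs
    obtain ⟨e, heE, rfl⟩ := Multiset.mem_map.1 hs
    have := hcard e heE
    rw [Finset.card_erase_of_mem (hcenter e heE)]
    omega)
  obtain ⟨F, hF, hFcard⟩ := exists_matching E _ _ B hB
  have hlab : ∀ e ∈ E, ∃ l : V → K4, (e.erase z).val.map l = F e :=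
    fun e heE => exists_labeling_s2 _ _ (hFcard e heE)
  choose! l hl using hlab
  have hunique : ∀ e ∈ E, ∀ f ∈ E, ∀ v, v ≠ z → v ∈ e → v ∈ f → e = f := by
    intro e heE f hf v hvz hve hvf
    by_contra hne
    have : v ∈ e ∩ f := Finset.mem_inter.2 ⟨hve, hvf⟩
    rw [hdisj e heE f hf hne, Finset.mem_singleton] at this
    exact hvz this
  choose! edge hedge hmem using hcover
  -- Outside the center, every vertex is labeled according to the unique edge containing it.
  let c : V → K4 := fun v => if v = z then z₀ else l (edge v) v
  have hcz : c z = z₀ := if_pos rfl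
  have hc : ∀ e ∈ E, (e.erase z).val.map c = F e := by
    intro e heE
    rw [← hl e heE]
    refine Multiset.map_congr rfl fun v hv => ?_
    obtain ⟨hvz, hve⟩ := Finset.mem_erase.1 hv
    have hvV := hsub e heE hve
    have : edge v = e := hunique _ (hedge v hvV) _ heE v hvz (hmem v hvV) hve
    simp only [c, if_neg hvz, this]
  have hpd : (E : Set (Finset V)).PairwiseDisjoint fun e => e.erase z := by
    intro e heE f hf hne
    refine Finset.disjoint_left.2 fun v hve hvf => hne ?_
    obtain ⟨hvz, hve⟩ := Finset.mem_erase.1 hve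
    exact hunique e heE f hf v hvz hve (Finset.mem_of_mem_erase hvf)
  have hVs : Vs.erase z = E.disjiUnion (fun e => e.erase z) hpd := by
    ext v
    simp only [Finset.mem_erase, Finset.mem_disjiUnion]
    constructor
    · rintro ⟨hvz, hvV⟩
      exact ⟨edge v, hedge v hvV, hvz, hmem v hvV⟩
    · rintro ⟨e, heE, hvz, hve⟩
      exact ⟨hvz, hsub e heE hve⟩
  have hVmap : Vs.val.map c = z₀ ::ₘ B.sum := by
    rw [← Finset.insert_erase hz, Finset.insert_val_of_notMem (Finset.notMem_erase z Vs),
      Multiset.map_cons, hcz, hVs, Finset.disjiUnion_val, Multiset.map_bind,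
      Multiset.bind_congr hc, ← hF]
    rfl
  have hEmap : E.val.map (edgeSum c) = (B.map Multiset.sum).map (z₀ + ·) := by
    rw [← hF, Multiset.map_map, Multiset.map_map]
    refine Multiset.map_congr rfl fun e heE => ?_
    rw [edgeSum, ← Finset.add_sum_erase e c (hcenter e heE), hcz, Finset.sum, hc e heE]
    rfl
  refine ⟨c, fun a b => ?_, fun a b => ?_⟩
  · rw [card_filter_eq_count, card_filter_eq_count, hVmap]
    exact hv.abs_le a b
  · rw [card_filter_eq_count, card_filter_eq_count, hEmap]
    exact (he.translate z₀).abs_le a b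
end

section
/- Let H be a 1-regular hypergraph (every vertex belongs to exactly one edge; equivalently, the edges are mutually disjoint and cover all vertices; edges of size 1 are allowed). If both the number of vertices |H| and the number of edges ‖H‖ are even and |H| ≢ ‖H‖ (mod 4), then H is not (Z₂×Z₂)-cordial. -/
/-!
In a 1-regular hypergraph the edges partition the vertex set, so the induced edge labels and the
vertex labels have the same total in `K4` (`sum_edgeSum`). For a balanced labeling of a set of even
size this total is `0` exactly when the size is divisible by `4` (`sum_eq_zero_iff_of_balanced`).
Applied to the vertices and to the edges, this forces two even sizes to agree modulo `4`.
-/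

open Finset

open Finset

/-- A balanced `K4`-labeling `f` of a set of even size has total `0` exactly when the size is
divisible by `4`: then all four classes have equal size, whereas for size `2` modulo `4` the total
is the sum of the two distinct labels whose classes are larger by one. -/
lemma sum_eq_zero_iff_of_balanced {α : Type*} (S : Finset α) (f : α → K4)
    (hbal : ∀ a b : K4, |((S.filter fun x => f x = a).card : ℤ) -
      ((S.filter fun x => f x = b).card : ℤ)| ≤ 1)
    (heven : S.card % 2 = 0) :
    ∑ x ∈ S, f x = 0 ↔ S.card % 4 = 0 := by
  have huniv : (univ : Finset K4) = {(0, 0), (0, 1), (1, 0), (1, 1)} := by decide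
  have hcard : S.card = ∑ a : K4, (S.filter fun x => f x = a).card :=
    card_eq_sum_card_fiberwise fun x _ => by simp
  have hsum : ∑ x ∈ S, f x = ∑ a : K4, (S.filter fun x => f x = a).card • a := by
    rw [← sum_fiberwise S f f]
    refine sum_congr rfl fun a _ => ?_
    rw [sum_congr rfl fun x hx => (mem_filter.1 hx).2, sum_const]
  have h1 := fun a => hbal (0, 0) a
  have h2 := fun a => hbal (0, 1) a
  have h3 := fun a => hbal (1, 0) a
  have h01 := abs_le.1 (h1 (0, 1))
  have h02 := abs_le.1 (h1 (1, 0))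
  have h03 := abs_le.1 (h1 (1, 1))
  have h12 := abs_le.1 (h2 (1, 0))
  have h13 := abs_le.1 (h2 (1, 1))
  have h23 := abs_le.1 (h3 (1, 1))
  clear hbal h1 h2 h3
  rw [huniv, sum_insert (by decide), sum_insert (by decide), sum_insert (by decide),
    sum_singleton] at hcard hsum
  rw [hsum]
  generalize (S.filter fun x => f x = (0, 0)).card = p at *
  generalize (S.filter fun x => f x = (0, 1)).card = q at *
  generalize (S.filter fun x => f x = (1, 0)).card = r at *
  generalize (S.filter fun x => f x = (1, 1)).card = s at *
  -- The two coordinates of the total are `r + s` and `q + s` modulo `2`.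
  have hcoord : p • ((0, 0) : K4) + (q • ((0, 1) : K4) + (r • ((1, 0) : K4) + s • ((1, 1) : K4)))
      = (((r + s : ℕ) : ZMod 2), ((q + s : ℕ) : ZMod 2)) := by
    ext <;> simp
  rw [hcoord, Prod.mk_eq_zero, ZMod.natCast_eq_zero_iff, ZMod.natCast_eq_zero_iff]
  omega

lemma sum_edgeSum {V : Type*} [DecidableEq V] (Vs : Finset V) (E : Finset (Finset V))
    (hsub : ∀ e ∈ E, e ⊆ Vs) (hreg : ∀ v ∈ Vs, ∃! e, e ∈ E ∧ v ∈ e) (c : V → K4) :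
    ∑ e ∈ E, edgeSum c e = ∑ v ∈ Vs, c v := by
  have hdisj : (E : Set (Finset V)).PairwiseDisjoint id := by
    intro e he e' he' hne
    refine Finset.disjoint_left.2 fun v hv hv' => hne ?_
    exact (hreg v (hsub e he hv)).unique ⟨he, hv⟩ ⟨he', hv'⟩
  have hcover : E.biUnion id = Vs := by
    ext v
    simp only [mem_biUnion, id]
    exact ⟨fun ⟨e, he, hv⟩ => hsub e he hv, fun hv => (hreg v hv).exists⟩
  rw [← hcover, sum_biUnion hdisj]
  rfl

/-- Let `H` be a 1-regular hypergraph: every vertex belongs to exactly one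
edge (edges nonempty, possibly of size 1).  If both the number of vertices and
the number of edges are even and they are not congruent modulo 4, then `H` is
not `Z₂×Z₂`-cordial. -/
theorem one_regular_not_cordial {V : Type*} [DecidableEq V] (Vs : Finset V)
    (E : Finset (Finset V))
    (hsub : ∀ e ∈ E, e ⊆ Vs)
    (hne : ∀ e ∈ E, e.Nonempty)
    (hreg : ∀ v ∈ Vs, ∃! e, e ∈ E ∧ v ∈ e)
    (hVeven : Vs.card % 2 = 0)
    (hEeven : E.card % 2 = 0)
    (hmod : Vs.card % 4 ≠ E.card % 4) :
    ¬ Cordial Vs E := by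
  rintro ⟨c, hV, hE⟩
  have hv := sum_eq_zero_iff_of_balanced Vs c hV hVeven
  have he := sum_eq_zero_iff_of_balanced E (edgeSum c) hE hEeven
  rw [sum_edgeSum Vs E hsub hreg c, hv] at he
  omega
end

section
/- Let H be a path hypergraph with three edges e_1, e_2, e_3 (so consecutive edges share exactly one vertex, non-consecutive edges are disjoint, and every vertex lies in some edge), such that the middle edge e_2 has size |e_2| = 2 and the number of vertices satisfies |H| ≡ 0 (mod 4). Then H is not (Z₂×Z₂)-cordial. -/
/-! Since the middle edge has two vertices, one in each outer edge, the vertex set is the disjoint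
union of `e₁` and `e₃`. As `4 ∣ |H|`, a friendly labeling uses every label equally often, so the sum
of all labels is a multiple of the sum of the elements of the Klein four-group, which is `0`
(`sum_eq_zero_of_friendly`). Hence the labels of `e₁` and `e₃` add up to `0`, i.e. they coincide.
Two of the three edges then share a label, while at least two labels occur on no edge, so the edge
label classes are not balanced. -/

open Finset

open Finset

/-- When `4 ∣ |Vs|` all label classes of a friendly labeling have the same size, and the elements of
the Klein four-group sum to `0`. -/
lemma sum_eq_zero_of_friendly {V : Type*} [DecidableEq V] (Vs : Finset V) (c : V → K4)
    (hmod : Vs.card % 4 = 0) (hf : Friendly Vs c) : ∑ v ∈ Vs, c v = 0 := by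
  have hcard : Vs.card = ∑ a : K4, (Vs.filter fun v => c v = a).card :=
    Finset.card_eq_sum_card_fiberwise (fun _ _ => Finset.mem_coe.2 (Finset.mem_univ _))
  have hsum : ∑ v ∈ Vs, c v = ∑ a : K4, (Vs.filter fun v => c v = a).card • a := by
    rw [← Finset.sum_fiberwise Vs c c]
    refine Finset.sum_congr rfl fun a _ => ?_
    rw [← Finset.sum_const]
    exact Finset.sum_congr rfl fun v hv => (Finset.mem_filter.1 hv).2
  have huniv : (Finset.univ : Finset K4) = {(0, 0), (0, 1), (1, 0), (1, 1)} := by decide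
  have heq : ∀ a : K4, (Vs.filter fun v => c v = a).card =
      (Vs.filter fun v => c v = (0, 0)).card := by
    have h1 := abs_le.1 (hf (0, 0) (0, 1))
    have h2 := abs_le.1 (hf (0, 0) (1, 0))
    have h3 := abs_le.1 (hf (0, 0) (1, 1))
    have h4 := abs_le.1 (hf (0, 1) (1, 0))
    have h5 := abs_le.1 (hf (0, 1) (1, 1))
    have h6 := abs_le.1 (hf (1, 0) (1, 1))
    rw [huniv, Finset.sum_insert (by decide), Finset.sum_insert (by decide),
      Finset.sum_insert (by decide), Finset.sum_singleton] at hcard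
    intro a
    have ha : a ∈ (Finset.univ : Finset K4) := Finset.mem_univ a
    rw [huniv] at ha
    simp only [Finset.mem_insert, Finset.mem_singleton] at ha
    rcases ha with rfl | rfl | rfl | rfl <;> omega
  have hzero : ∑ a : K4, a = 0 := by decide
  rw [hsum, Finset.sum_congr rfl fun a _ => by rw [heq a], ← Finset.smul_sum, hzero, smul_zero]

/-- Let `H` be a path hypergraph with three edges `e₁, e₂, e₃`: consecutive
edges share exactly one vertex, the outer edges are disjoint, the edges cover
the vertex set, and each edge has at least two vertices.  If the middle edge
has size exactly 2 and `|H| ≡ 0 (mod 4)`, then `H` is not `Z₂×Z₂`-cordial. -/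
theorem path_three_edges_not_cordial {V : Type*} [DecidableEq V] (Vs : Finset V)
    (e1 e2 e3 : Finset V)
    (hd12 : e1 ≠ e2) (hd23 : e2 ≠ e3) (hd13 : e1 ≠ e3)
    (h12 : (e1 ∩ e2).card = 1)
    (h23 : (e2 ∩ e3).card = 1)
    (h13 : e1 ∩ e3 = ∅)
    (hcover : e1 ∪ e2 ∪ e3 = Vs)
    (hc1 : 2 ≤ e1.card) (hc3 : 2 ≤ e3.card)
    (hc2 : e2.card = 2)
    (hmod : Vs.card % 4 = 0) :
    ¬ Cordial Vs ({e1, e2, e3} : Finset (Finset V)) := by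
  rintro ⟨c, hf, hE⟩
  have hdisj : Disjoint e1 e3 := Finset.disjoint_iff_inter_eq_empty.2 h13
  have hsub : e2 ⊆ e1 ∪ e3 := by
    -- the traces of `e₂` on `e₁` and `e₃` are disjoint singletons, hence exhaust `e₂`
    have hd : Disjoint (e1 ∩ e2) (e2 ∩ e3) :=
      hdisj.mono Finset.inter_subset_left Finset.inter_subset_right
    have hu : (e1 ∩ e2) ∪ (e2 ∩ e3) = e2 := by
      apply Finset.eq_of_subset_of_card_le
      · exact Finset.union_subset Finset.inter_subset_right Finset.inter_subset_left
      · rw [Finset.card_union_of_disjoint hd]; omega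
    rw [← hu]
    exact Finset.union_subset_union Finset.inter_subset_left Finset.inter_subset_right
  have hV : e1 ∪ e3 = Vs := by
    rw [← hcover, Finset.union_right_comm, Finset.union_eq_left.2 hsub]
  have hs : edgeSum c e1 + edgeSum c e3 = 0 := by
    rw [edgeSum, edgeSum, ← Finset.sum_union hdisj, hV]
    exact sum_eq_zero_of_friendly Vs c hmod hf
  have h2 : ∀ x y : K4, x + y = 0 → x = y := by decide
  have h13s := h2 _ _ hs
  have hmiss : ∀ x y : K4, ∃ b, x ≠ b ∧ y ≠ b := by decide
  obtain ⟨b, hb1, hb2⟩ := hmiss (edgeSum c e1) (edgeSum c e2)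
  have hb0 : (({e1, e2, e3} : Finset (Finset V)).filter fun e => edgeSum c e = b).card = 0 := by
    rw [Finset.card_eq_zero, Finset.filter_eq_empty_iff]
    intro e he
    simp only [Finset.mem_insert, Finset.mem_singleton] at he
    rcases he with rfl | rfl | rfl
    · exact hb1
    · exact hb2
    · rwa [← h13s]
  have ha2 : 2 ≤ (({e1, e2, e3} : Finset (Finset V)).filter
      fun e => edgeSum c e = edgeSum c e1).card := by
    refine (Finset.card_pair hd13).ge.trans ?_
    apply Finset.card_le_card
    intro e he
    simp only [Finset.mem_insert, Finset.mem_singleton] at he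
    rcases he with rfl | rfl <;> simp [h13s]
  have := abs_le.1 (hE (edgeSum c e1) b)
  omega
end

section
/- Every path hypergraph with exactly two edges, both of size at least 3, is (Z₂×Z₂)-cordial. -/
/-!
If the two edges `e1`, `e2` meet in the single vertex `w`, then
`edgeSum c e1 + edgeSum c e2 = edgeSum c Vs + c w`. Since `K4` has exponent two, the edge labels
differ exactly when `c w ≠ edgeSum c Vs`, and two edges with different labels satisfy the edge
condition. So it suffices to find a friendly labeling with `c w ≠ edgeSum c Vs`.

Friendly labelings exist on every finite set (`exists_friendly`). On at least two vertices
such a labeling is not constant, so if `c w = edgeSum c Vs`, exchanging the labels of `w` and of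
some `v` with `c v ≠ c w` gives a labeling that is still friendly, has the same total, and has a
different label at `w`.
-/

open Finset

open Finset

/-- Vertices are added one at a time, each receiving a label whose class is currently smallest. -/
lemma exists_friendly {V : Type*} [DecidableEq V] (s : Finset V) :
    ∃ c : V → K4, Friendly s c := by
  induction s using Finset.induction_on with
  | empty => exact ⟨0, fun a b => by simp⟩
  | insert x s hx ih =>
    obtain ⟨c, hc⟩ := ih
    obtain ⟨m, hm⟩ := Finite.exists_min (fun a : K4 => (s.filter fun v => c v = a).card)
    have key : ∀ a, ((insert x s).filter fun v => Function.update c x m v = a).card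
        = (s.filter fun v => c v = a).card + if m = a then 1 else 0 := by
      intro a
      have h : (s.filter fun v => Function.update c x m v = a) = s.filter fun v => c v = a := by
        apply Finset.filter_congr
        intro v hv
        rw [Function.update_of_ne (by rintro rfl; exact hx hv)]
      rw [Finset.filter_insert, Function.update_self, h]
      split_ifs with h1
      · rw [Finset.card_insert_of_notMem (by simp [hx])]
      · simp
    refine ⟨Function.update c x m, fun a b => ?_⟩
    rw [key, key]
    have h1 := abs_le.mp (hc a b)
    have ha := hm a
    have hb := hm b
    rw [abs_le]
    push_cast
    by_cases h2 : m = a <;> by_cases h3 : m = b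
    · subst h2; subst h3; simp
    · subst h2; simp only [if_true, if_neg h3]; omega
    · subst h3; simp only [if_true, if_neg h2]; omega
    · simp only [if_neg h2, if_neg h3]; omega

/-- The total is unchanged by a permutation of the labels inside `s`, so the shared vertex can be
given a label different from it. -/
lemma exists_friendly_ne {V : Type*} [DecidableEq V] (s : Finset V) (w : V) (hw : w ∈ s)
    (hs : 2 ≤ s.card) : ∃ c : V → K4, Friendly s c ∧ c w ≠ edgeSum c s := by
  obtain ⟨c, hc⟩ := exists_friendly s
  by_cases h : c w = edgeSum c s
  swap
  · exact ⟨c, hc, h⟩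
  obtain ⟨v, hv, hvw⟩ : ∃ v ∈ s, c v ≠ c w := by
    by_contra! hall
    have h1 := abs_le.mp (hc (c w) (c w + (1, 0)))
    have hne : c w ≠ c w + (1, 0) := by simp
    rw [Finset.filter_true_of_mem hall, Finset.filter_false_of_mem
      (fun v hv => by rw [hall v hv]; exact hne)] at h1
    simp only [Finset.card_empty] at h1
    omega
  have hmem : ∀ u, Equiv.swap w v u ∈ s ↔ u ∈ s := by
    intro u
    rw [Equiv.swap_apply_def]
    split_ifs with h1 h2
    · subst h1; simp [hv, hw]
    · subst h2; simp [hv, hw]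
    · rfl
  have hcard : ∀ a, (s.filter fun u => c (Equiv.swap w v u) = a).card
      = (s.filter fun u => c u = a).card := by
    intro a
    apply Finset.card_equiv (Equiv.swap w v)
    intro u
    simp [hmem]
  have hsum : edgeSum (fun u => c (Equiv.swap w v u)) s = edgeSum c s :=
    Finset.sum_equiv (Equiv.swap w v) (fun u => (hmem u).symm) (fun _ _ => rfl)
  refine ⟨fun u => c (Equiv.swap w v u), fun a b => ?_, ?_⟩
  · rw [hcard, hcard]; exact hc a b
  · rw [hsum, ← h]; simpa using hvw

/-- Every path hypergraph with exactly two edges, both of size at least 3, is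
`Z₂×Z₂`-cordial: two distinct edges sharing exactly one vertex and covering the
whole vertex set. -/
theorem path_two_edges_cordial {V : Type*} [DecidableEq V] (Vs : Finset V)
    (e1 e2 : Finset V)
    (hne : e1 ≠ e2)
    (hint : (e1 ∩ e2).card = 1)
    (hcover : e1 ∪ e2 = Vs)
    (hc1 : 3 ≤ e1.card) (hc2 : 3 ≤ e2.card) :
    Cordial Vs ({e1, e2} : Finset (Finset V)) := by
  obtain ⟨w, hw⟩ := Finset.card_eq_one.mp hint
  have hwV : w ∈ Vs := by
    have : w ∈ e1 ∩ e2 := by simp [hw]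
    rw [← hcover]
    exact Finset.mem_union_left _ (Finset.mem_inter.mp this).1
  have hcV : 2 ≤ Vs.card := by
    have : e1.card ≤ Vs.card := Finset.card_le_card (hcover ▸ Finset.subset_union_left)
    omega
  obtain ⟨c, hc, hcw⟩ := exists_friendly_ne Vs w hwV hcV
  have htwo : ∀ x : K4, x + x = 0 := by decide
  have hdiff : edgeSum c e1 ≠ edgeSum c e2 := by
    intro h
    have h1 : edgeSum c Vs + c w = edgeSum c e1 + edgeSum c e2 := by
      have := Finset.sum_union_inter (s₁ := e1) (s₂ := e2) (f := c)
      rwa [hcover, hw, Finset.sum_singleton] at this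
    rw [h, htwo, ← htwo (c w)] at h1
    exact hcw (add_right_cancel h1).symm
  have hle : ∀ a, (({e1, e2} : Finset (Finset V)).filter fun e => edgeSum c e = a).card ≤ 1 := by
    intro a
    rw [Finset.card_le_one]
    intro x hx y hy
    simp only [Finset.mem_filter, Finset.mem_insert, Finset.mem_singleton] at hx hy
    obtain ⟨rfl | rfl, hx⟩ := hx <;> obtain ⟨rfl | rfl, hy⟩ := hy
    · rfl
    · exact absurd (hx.trans hy.symm) hdiff
    · exact absurd (hy.trans hx.symm) hdiff
    · rfl
  refine ⟨c, hc, fun a b => ?_⟩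
  have h1 := hle a
  have h2 := hle b
  rw [abs_le]
  omega
end
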